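/- If (X,𝒳,μ,T) is a weakly mixing invertible measure-preserving system on a Lebesgue probability space, then for every d ∈ ℕ it has a strictly ergodic topological model (X̂,T̂) such that the action of ⟨τ_d,σ_d⟩ on N_d(X̂) is strictly ergodic. -/

import Mathlib

open MeasureTheory Topology Filter

namespace HSY

/-- The group structure on self-homeomorphisms of a topological space,
with `a * b = b.trans a` (i.e. composition `a ∘ b`). -/
instance homeoGroup (X : Type*) [TopologicalSpace X] : Group (X ≃ₜ X) where
  mul a b := b.trans a
  one := Homeomorph.refl X
  inv := Homeomorph.symm
  mul_assoc a b c := rfl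
  one_mul a := by ext x; rfl
  mul_one a := by ext x; rfl
  inv_mul_cancel a := by
    show a.trans a.symm = Homeomorph.refl X
    ext x; exact a.symm_apply_apply x

/-- A measure-theoretic isomorphism (mod null sets) between the system `(X, μ, T)` and the
system `(Y, ν, S)`. -/
def MeasIso {X Y : Type*} [MeasurableSpace X] [MeasurableSpace Y]
    (μ : Measure X) (T : X → X) (ν : Measure Y) (S : Y → Y) : Prop :=
  ∃ (φ : X → Y) (ψ : Y → X), Measurable φ ∧ Measurable ψ ∧
    Measure.map φ μ = ν ∧
    (∀ᵐ x ∂μ, ψ (φ x) = x) ∧ (∀ᵐ y ∂ν, φ (ψ y) = y) ∧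
    (∀ᵐ x ∂μ, φ (T x) = S (φ x))

/-- The orbit of a point under the group of homeomorphisms generated by `gens`. -/
def grpOrbit {Y : Type*} [TopologicalSpace Y] (gens : Set (Y ≃ₜ Y)) (y : Y) : Set Y :=
  {z | ∃ g ∈ Subgroup.closure gens, (g : Y ≃ₜ Y) y = z}

/-- The action of the group of homeomorphisms generated by `gens` on the (invariant) set `A`
is strictly ergodic: the orbit of every point of `A` is dense in `A` (minimality), and there is
exactly one invariant Borel probability measure giving full mass to `A` (unique ergodicity). -/
def StrictlyErgodicOn {Y : Type*} [TopologicalSpace Y] [MeasurableSpace Y]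
    (gens : Set (Y ≃ₜ Y)) (A : Set Y) : Prop :=
  (∀ y ∈ A, closure (grpOrbit gens y) = A) ∧
  (∃! ν : Measure Y, IsProbabilityMeasure ν ∧ ν A = 1 ∧ ∀ g ∈ gens, MeasurePreserving g ν ν)

/-- A homeomorphism is strictly ergodic: minimal and uniquely ergodic. -/
def StrictlyErgodicHomeo {Y : Type*} [TopologicalSpace Y] [MeasurableSpace Y] (S : Y ≃ₜ Y) :
    Prop :=
  (∀ y : Y, Dense (Set.range fun n : ℤ => (S ^ n) y)) ∧
  (∃! ν : Measure Y, IsProbabilityMeasure ν ∧ MeasurePreserving S ν ν)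

/-- `(Y, ν, S)` is a topological model of the measure preserving system `(X, μ, T)`:
`ν` is an `S`-invariant Borel probability measure and the two systems are measure
theoretically isomorphic. -/
def IsModel {X : Type*} [MeasurableSpace X] (μ : Measure X) (T : X → X)
    {Y : Type*} [TopologicalSpace Y] [MeasurableSpace Y] (S : Y ≃ₜ Y) (ν : Measure Y) : Prop :=
  IsProbabilityMeasure ν ∧ MeasurePreserving S ν ν ∧ MeasIso μ T ν S

/-- `τ_d = S × ⋯ × S` (`d` times) acting on `Y^d`. -/
def tauHomeo {Y : Type*} [TopologicalSpace Y] (S : Y ≃ₜ Y) (d : ℕ) :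
    (Fin d → Y) ≃ₜ (Fin d → Y) :=
  Homeomorph.piCongrRight fun _ => S

/-- `σ_d = S × S² × ⋯ × S^d` acting on `Y^d`. -/
def sigmaHomeo {Y : Type*} [TopologicalSpace Y] (S : Y ≃ₜ Y) (d : ℕ) :
    (Fin d → Y) ≃ₜ (Fin d → Y) :=
  Homeomorph.piCongrRight fun i => S ^ ((i : ℕ) + 1)

/-- The generators `τ_d, σ_d` of the group `⟨τ_d, σ_d⟩`. -/
def apGens {Y : Type*} [TopologicalSpace Y] (S : Y ≃ₜ Y) (d : ℕ) :
    Set ((Fin d → Y) ≃ₜ (Fin d → Y)) :=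
  {tauHomeo S d, sigmaHomeo S d}

/-!
By a Jewett–Krieger argument, an ergodic atomless system has a model whose measure has full support
and is the only invariant probability measure. Fix a coding of the space by sequences of bits and
impose the uniform frequency of longer and longer patterns one after the other: over a sparse
marker set, the few columns along which the ergodic averages are bad are replaced by columns of the
same height with good averages. The averages then are good along every pseudo-orbit, that is along
every sequence of points which may jump between columns, and this property survives all the later
changes. The coding changes only on sets of summable measure and each coordinate is stored
infinitely often, so the limit coding is injective almost everywhere; its frequencies being uniform,
the support of the image measure carries no other invariant measure.

For a weakly mixing system every such model `(Y, ν, S)` works, for all `d` simultaneously. More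
generally, let `e₁ < ⋯ < eₙ` and let `ρ` be a probability measure on `Yⁿ` invariant under
`S × ⋯ × S` and `S^e₁ × ⋯ × S^eₙ`. By unique ergodicity the first marginal of `ρ` is `ν`, and by
induction on `n` the last `n - 1` coordinates have distribution `ν × ⋯ × ν`. Dividing by a power of
the diagonal map, `ρ` is invariant under `id × S^(e₂ - e₁) × ⋯ × S^(eₙ - e₁)`, which acts
ergodically on the last `n - 1` coordinates because `ν` is weakly mixing. These are thus independent
of the first one, and `ρ = ν × ⋯ × ν`. Uniqueness and full support of this measure make all orbits
dense.
-/

/-! ### The mean ergodic theorem -/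

section MeanErgodic

variable {α : Type*} [MeasurableSpace α] {μ : Measure α} {f : α → α}

theorem integrable_comp_iterate (hf : MeasurePreserving f μ μ) {g : α → ℝ}
    (hg : Integrable g μ) (k : ℕ) : Integrable (fun x => g (f^[k] x)) μ :=
  (hf.iterate k).integrable_comp_of_integrable hg

theorem integrable_birkhoffAverage (hf : MeasurePreserving f μ μ) {g : α → ℝ}
    (hg : Integrable g μ) (n : ℕ) : Integrable (birkhoffAverage ℝ f g n) μ :=
  (integrable_finsetSum _ fun k _ => integrable_comp_iterate hf hg k).const_mul _

theorem integral_birkhoffAverage (hf : MeasurePreserving f μ μ) {g : α → ℝ}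
    (hg : Integrable g μ) {n : ℕ} (hn : n ≠ 0) :
    ∫ x, birkhoffAverage ℝ f g n x ∂μ = ∫ x, g x ∂μ := by
  have integral_iterate (k : ℕ) : ∫ x, g (f^[k] x) ∂μ = ∫ x, g x ∂μ := by
    rw [← integral_map (hf.iterate k).aemeasurable
      (by rw [(hf.iterate k).map_eq]; exact hg.aestronglyMeasurable), (hf.iterate k).map_eq]
  simp only [birkhoffAverage, birkhoffSum, smul_eq_mul]
  rw [integral_const_mul, integral_finsetSum _ fun k _ => integrable_comp_iterate hf hg k]
  simp [integral_iterate, hn]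

section Lp

variable {E : Type*} [NormedAddCommGroup E] {p : ENNReal}

theorem coeFn_iterate_compMeasurePreserving (hf : MeasurePreserving f μ μ) (v : Lp E p μ) (k : ℕ) :
    ((Lp.compMeasurePreserving f hf)^[k] v : Lp E p μ) =ᵐ[μ] v ∘ f^[k] := by
  induction k with
  | zero => rfl
  | succ k ih =>
    rw [Function.iterate_succ_apply', Function.iterate_succ, ← Function.comp_assoc]
    exact (Lp.coeFn_compMeasurePreserving _ hf).trans (hf.quasiMeasurePreserving.ae_eq_comp ih)

theorem coeFn_birkhoffAverage_compMeasurePreserving [NormedSpace ℝ E]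
    (hf : MeasurePreserving f μ μ) (v : Lp E p μ) (n : ℕ) :
    (birkhoffAverage ℝ (Lp.compMeasurePreserving f hf) id n v : Lp E p μ) =ᵐ[μ]
      birkhoffAverage ℝ f v n := by
  have hiter : ∀ᵐ x ∂μ, ∀ k,
      ((Lp.compMeasurePreserving f hf)^[k] v : Lp E p μ) x = v (f^[k] x) :=
    ae_all_iff.2 (coeFn_iterate_compMeasurePreserving hf v)
  filter_upwards [Lp.coeFn_smul (n : ℝ)⁻¹ (birkhoffSum (Lp.compMeasurePreserving f hf) id n v),
    Lp.coeFn_finsetSum (Finset.range n) fun k => (Lp.compMeasurePreserving f hf)^[k] v,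
    hiter] with x hsmul hsum hiter
  simp only [birkhoffAverage, birkhoffSum, id] at hsmul ⊢
  rw [hsmul, Pi.smul_apply, hsum, Finset.sum_apply]
  simp only [hiter]

theorem integral_norm_le_norm_Lp [IsProbabilityMeasure μ] [Fact (1 ≤ p)] (v : Lp E p μ) :
    ∫ x, ‖v x‖ ∂μ ≤ ‖v‖ := by
  rw [Lp.norm_def, integral_norm_eq_lintegral_enorm (Lp.aestronglyMeasurable v),
    ← eLpNorm_one_eq_lintegral_enorm]
  exact ENNReal.toReal_mono (Lp.eLpNorm_ne_top v)
    (eLpNorm_le_eLpNorm_of_exponent_le Fact.out (Lp.aestronglyMeasurable v))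

end Lp

theorem exists_tendsto_integral_abs_birkhoffAverage_sub [IsProbabilityMeasure μ]
    (hf : Ergodic f μ) {g : α → ℝ} (hg : MemLp g 2 μ) :
    ∃ c, Tendsto (fun n => ∫ x, |birkhoffAverage ℝ f g n x - c| ∂μ) atTop (𝓝 0) := by
  have hmp := hf.toMeasurePreserving
  let U : Lp ℝ 2 μ →L[ℝ] Lp ℝ 2 μ :=
    (Lp.compMeasurePreservingₗᵢ ℝ f hmp).toContinuousLinearMap
  let G : Lp ℝ 2 μ := hg.toLp g
  let P := (U.eqLocus (1 : Lp ℝ 2 μ →L[ℝ] Lp ℝ 2 μ)).orthogonalProjectionOnto G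
  have von_neumann : Tendsto (birkhoffAverage ℝ U id · G) atTop (𝓝 P) :=
    U.tendsto_birkhoffAverage_orthogonalProjection (LinearIsometry.norm_toContinuousLinearMap_le _)
      G
  have hP : U P = P := P.2
  have hPf : (P : Lp ℝ 2 μ) ∘ f =ᵐ[μ] (P : Lp ℝ 2 μ) := by
    have hUP : U P =ᵐ[μ] (P : Lp ℝ 2 μ) ∘ f := Lp.coeFn_compMeasurePreserving _ hmp
    rw [hP] at hUP
    exact hUP.symm
  obtain ⟨c, hc⟩ := hf.ae_eq_const_of_ae_eq_comp_ae (Lp.aestronglyMeasurable _) hPf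
  refine ⟨c, squeeze_zero (fun n => integral_nonneg fun x => abs_nonneg _) (fun n => ?_)
    (tendsto_iff_norm_sub_tendsto_zero.1 von_neumann)⟩
  have hGg : birkhoffAverage ℝ f G n =ᵐ[μ] birkhoffAverage ℝ f g n :=
    hmp.quasiMeasurePreserving.birkhoffAverage_ae_eq_of_ae_eq ℝ hg.coeFn_toLp n
  calc ∫ x, |birkhoffAverage ℝ f g n x - c| ∂μ
      = ∫ x, ‖(birkhoffAverage ℝ U id n G - P : Lp ℝ 2 μ) x‖ ∂μ := by
        refine integral_congr_ae ?_
        filter_upwards [Lp.coeFn_sub (birkhoffAverage ℝ U id n G) (P : Lp ℝ 2 μ), hc, hGg,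
          coeFn_birkhoffAverage_compMeasurePreserving hmp G n] with x hsub hc hGg hav
        have hav : birkhoffAverage ℝ U id n G x = birkhoffAverage ℝ f G n x := hav
        rw [hsub, Pi.sub_apply, hav, hGg, hc, Real.norm_eq_abs, Function.const_apply]
    _ ≤ _ := integral_norm_le_norm_Lp _

theorem tendsto_integral_abs_birkhoffAverage_sub [IsProbabilityMeasure μ]
    (hf : Ergodic f μ) {g : α → ℝ} (hg : MemLp g 2 μ) :
    Tendsto (fun n => ∫ x, |birkhoffAverage ℝ f g n x - ∫ y, g y ∂μ| ∂μ) atTop (𝓝 0) := by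
  obtain ⟨c, hc⟩ := exists_tendsto_integral_abs_birkhoffAverage_sub hf hg
  have hmp := hf.toMeasurePreserving
  have hgi : Integrable g μ := hg.integrable one_le_two
  have integral_sub_le (n : ℕ) (hn : n ≠ 0) :
      |∫ y, g y ∂μ - c| ≤ ∫ x, |birkhoffAverage ℝ f g n x - c| ∂μ := by
    calc |∫ y, g y ∂μ - c| = |∫ x, (birkhoffAverage ℝ f g n x - c) ∂μ| := by
          rw [integral_sub (integrable_birkhoffAverage hmp hgi n) (integrable_const c),
            integral_birkhoffAverage hmp hgi hn]
          simp
      _ ≤ _ := abs_integral_le_integral_abs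
  have hgc : |∫ y, g y ∂μ - c| ≤ 0 :=
    ge_of_tendsto hc ((eventually_ne_atTop 0).mono integral_sub_le)
  rwa [sub_eq_zero.1 (abs_nonpos_iff.1 hgc)]

theorem tendsto_cesaro_measureReal_inter [IsProbabilityMeasure μ] (hf : Ergodic f μ)
    {A : Set α} (hA : MeasurableSet A) (B : Set α) :
    Tendsto (fun N : ℕ => (N : ℝ)⁻¹ * ∑ j ∈ Finset.range N, μ.real (f^[j] ⁻¹' A ∩ B))
      atTop (𝓝 (μ.real A * μ.real B)) := by
  have hmp := hf.toMeasurePreserving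
  let g : α → ℝ := A.indicator 1
  have hgi : Integrable g μ := (integrable_const 1).indicator hA
  have hgf (j : ℕ) : (fun x => g (f^[j] x)) = (f^[j] ⁻¹' A).indicator 1 :=
    funext fun _ => (Set.indicator_comp_right f^[j]).symm
  have h_integrable := integrable_birkhoffAverage hmp hgi
  have integral_average (N : ℕ) : (N : ℝ)⁻¹ * ∑ j ∈ Finset.range N, μ.real (f^[j] ⁻¹' A ∩ B) =
      ∫ x in B, birkhoffAverage ℝ f g N x ∂μ := by
    simp only [birkhoffAverage, birkhoffSum, smul_eq_mul]
    rw [integral_const_mul, integral_finsetSum _ fun j _ =>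
      (integrable_comp_iterate hmp hgi j).integrableOn]
    congr 1
    refine Finset.sum_congr rfl fun j _ => ?_
    have hm : MeasurableSet (f^[j] ⁻¹' A) := (hmp.iterate j).measurable hA
    rw [hgf, integral_indicator_one hm, measureReal_restrict_apply hm]
  have hlim := tendsto_integral_abs_birkhoffAverage_sub hf
    (g := g) ((memLp_const (1 : ℝ)).indicator hA)
  rw [integral_indicator_one hA] at hlim
  rw [tendsto_iff_norm_sub_tendsto_zero]
  refine squeeze_zero (fun _ => norm_nonneg _) (fun N => ?_) hlim
  calc ‖(N : ℝ)⁻¹ * ∑ j ∈ Finset.range N, μ.real (f^[j] ⁻¹' A ∩ B) - μ.real A * μ.real B‖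
      = |∫ x in B, (birkhoffAverage ℝ f g N x - μ.real A) ∂μ| := by
        rw [integral_sub (h_integrable N).integrableOn (integrable_const _), setIntegral_const,
          integral_average, Real.norm_eq_abs, smul_eq_mul, mul_comm (μ.real A)]
    _ ≤ ∫ x in B, |birkhoffAverage ℝ f g N x - μ.real A| ∂μ := abs_integral_le_integral_abs
    _ ≤ ∫ x, |birkhoffAverage ℝ f g N x - μ.real A| ∂μ :=
        setIntegral_le_integral ((h_integrable N).sub (integrable_const _)).abs
          (ae_of_all _ fun x => abs_nonneg _)

end MeanErgodic

/-! ### Cesàro mixing and products -/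

/-- Weak mixing of `T`, stated as strong Cesàro decay of correlations of sets. Unlike ergodicity of
`T × T`, this form passes directly to powers of `T` and to finite products. -/
def CesaroMixing {X : Type*} [MeasurableSpace X] (μ : Measure X) (T : X → X) : Prop :=
  ∀ A B : Set X, MeasurableSet A → MeasurableSet B →
    Tendsto (fun N : ℕ => (N : ℝ)⁻¹ * ∑ j ∈ Finset.range N,
      |μ.real (T^[j] ⁻¹' A ∩ B) - μ.real A * μ.real B|) atTop (𝓝 0)

theorem cesaro_sub_sq {a : ℕ → ℝ} {c : ℝ} {N : ℕ} (hN : N ≠ 0) :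
    (N : ℝ)⁻¹ * ∑ j ∈ Finset.range N, (a j - c) ^ 2 =
      (N : ℝ)⁻¹ * ∑ j ∈ Finset.range N, a j ^ 2 -
        2 * c * ((N : ℝ)⁻¹ * ∑ j ∈ Finset.range N, a j) + c ^ 2 := by
  have expand : ∑ j ∈ Finset.range N, (a j - c) ^ 2 = ∑ j ∈ Finset.range N, a j ^ 2 -
      2 * c * ∑ j ∈ Finset.range N, a j + N * c ^ 2 := by
    simp only [sub_sq, Finset.sum_add_distrib, Finset.sum_sub_distrib, Finset.mul_sum,
      Finset.sum_const, Finset.card_range, nsmul_eq_mul, mul_right_comm]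
  have hN : (N : ℝ) ≠ 0 := Nat.cast_ne_zero.2 hN
  rw [expand]
  field_simp

theorem cesaro_abs_le_sqrt (u : ℕ → ℝ) (N : ℕ) :
    (N : ℝ)⁻¹ * ∑ j ∈ Finset.range N, |u j| ≤ √((N : ℝ)⁻¹ * ∑ j ∈ Finset.range N, u j ^ 2) := by
  apply Real.le_sqrt_of_sq_le
  rcases eq_or_ne N 0 with rfl | hN
  · simp
  have hN' : (0 : ℝ) < N := Nat.cast_pos.2 (Nat.pos_of_ne_zero hN)
  have cauchy_schwarz := sq_sum_le_card_mul_sum_sq (s := Finset.range N) (f := fun j => |u j|)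
  simp only [Finset.card_range, sq_abs] at cauchy_schwarz
  rw [mul_pow, inv_pow, inv_mul_le_iff₀ (pow_pos hN' 2)]
  refine cauchy_schwarz.trans_eq ?_
  field_simp

theorem tendsto_cesaro_abs_sub {a : ℕ → ℝ} {c : ℝ}
    (h₁ : Tendsto (fun N : ℕ => (N : ℝ)⁻¹ * ∑ j ∈ Finset.range N, a j) atTop (𝓝 c))
    (h₂ : Tendsto (fun N : ℕ => (N : ℝ)⁻¹ * ∑ j ∈ Finset.range N, a j ^ 2) atTop (𝓝 (c ^ 2))) :
    Tendsto (fun N : ℕ => (N : ℝ)⁻¹ * ∑ j ∈ Finset.range N, |a j - c|) atTop (𝓝 0) := by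
  have hsq : Tendsto (fun N : ℕ => (N : ℝ)⁻¹ * ∑ j ∈ Finset.range N, (a j - c) ^ 2) atTop
      (𝓝 0) := by
    have h := (h₂.sub (h₁.const_mul (2 * c))).add_const (c ^ 2)
    rw [show c ^ 2 - 2 * c * c + c ^ 2 = 0 by ring] at h
    exact h.congr' ((eventually_ne_atTop 0).mono fun N hN => (cesaro_sub_sq hN).symm)
  exact squeeze_zero (fun N => by positivity) (fun N => cesaro_abs_le_sqrt _ N)
    (by simpa using hsq.sqrt)

theorem cesaroMixing_of_ergodic_prod {X : Type*} [MeasurableSpace X] {μ : Measure X}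
    [IsProbabilityMeasure μ] {T : X → X} (hwm : Ergodic (Prod.map T T) (μ.prod μ)) :
    CesaroMixing μ T := by
  intro A B hA _
  apply tendsto_cesaro_abs_sub
  · simpa only [Prod.map_iterate, Set.preimage_prod_map_prod, Set.prod_inter_prod,
      measureReal_prod_prod, Set.preimage_univ, Set.univ_inter, probReal_univ, mul_one] using
      tendsto_cesaro_measureReal_inter hwm (hA.prod MeasurableSet.univ) (B ×ˢ Set.univ)
  · simpa only [Prod.map_iterate, Set.preimage_prod_map_prod, Set.prod_inter_prod,
      measureReal_prod_prod, mul_mul_mul_comm, ← sq, ← mul_pow] using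
      tendsto_cesaro_measureReal_inter hwm (hA.prod hA) (B ×ˢ B)

theorem cesaro_comp_mul_le {u : ℕ → ℝ} (hu : ∀ j, 0 ≤ u j) {m : ℕ} (hm : 0 < m) (N : ℕ) :
    (N : ℝ)⁻¹ * ∑ j ∈ Finset.range N, u (m * j) ≤
      m * (((m * N : ℕ) : ℝ)⁻¹ * ∑ j ∈ Finset.range (m * N), u j) := by
  have hm' : (m : ℝ) ≠ 0 := Nat.cast_ne_zero.2 hm.ne'
  rw [Nat.cast_mul, mul_inv, ← mul_assoc, mul_inv_cancel_left₀ hm']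
  refine mul_le_mul_of_nonneg_left ?_ (by positivity)
  rw [← Finset.sum_image (f := u) (g := fun j => m * j)
    fun x _ y _ hxy => Nat.eq_of_mul_eq_mul_left hm hxy]
  refine Finset.sum_le_sum_of_subset_of_nonneg ?_ fun _ _ _ => hu _
  simp only [Finset.image_subset_iff, Finset.mem_range]
  exact fun j hj => Nat.mul_lt_mul_of_pos_left hj hm

theorem CesaroMixing.iterate {X : Type*} [MeasurableSpace X] {μ : Measure X}
    {T : X → X} (h : CesaroMixing μ T) {m : ℕ} (hm : 0 < m) : CesaroMixing μ T^[m] := by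
  intro A B hA hB
  have hlim := ((h A B hA hB).comp (tendsto_id.const_mul_atTop' hm)).const_mul (m : ℝ)
  rw [mul_zero] at hlim
  refine squeeze_zero (fun N => by positivity) (fun N => ?_) hlim
  simp only [← Function.iterate_mul]
  exact cesaro_comp_mul_le (u := fun j => |μ.real (T^[j] ⁻¹' A ∩ B) - μ.real A * μ.real B|)
    (fun _ => abs_nonneg _) hm N

theorem abs_prod_sub_prod_le_sum {ι : Type*} (s : Finset ι) {x y : ι → ℝ}
    (hx0 : ∀ i, 0 ≤ x i) (hx1 : ∀ i, x i ≤ 1) (hy0 : ∀ i, 0 ≤ y i) (hy1 : ∀ i, y i ≤ 1) :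
    |∏ i ∈ s, x i - ∏ i ∈ s, y i| ≤ ∑ i ∈ s, |x i - y i| := by
  classical
  induction s using Finset.induction_on with
  | empty => simp
  | insert a s ha ih =>
    have hx : |∏ i ∈ s, x i| ≤ 1 := by
      rw [abs_of_nonneg (Finset.prod_nonneg fun i _ => hx0 i)]
      exact Finset.prod_le_one (fun i _ => hx0 i) fun i _ => hx1 i
    rw [Finset.prod_insert ha, Finset.prod_insert ha, Finset.sum_insert ha]
    calc |x a * ∏ i ∈ s, x i - y a * ∏ i ∈ s, y i|
        = |(x a - y a) * ∏ i ∈ s, x i + y a * (∏ i ∈ s, x i - ∏ i ∈ s, y i)| := by ring_nf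
      _ ≤ |x a - y a| * |∏ i ∈ s, x i| + y a * |∏ i ∈ s, x i - ∏ i ∈ s, y i| := by
        rw [← abs_mul, ← abs_of_nonneg (hy0 a), ← abs_mul, abs_of_nonneg (hy0 a)]
        exact abs_add_le _ _
      _ ≤ |x a - y a| + ∑ i ∈ s, |x i - y i| :=
        add_le_add (mul_le_of_le_one_right (abs_nonneg _) hx)
          ((mul_le_of_le_one_left (abs_nonneg _) (hy1 a)).trans ih)

section Pi

variable {ι : Type*} [Fintype ι] {Y : ι → Type*} [∀ i, MeasurableSpace (Y i)]
  {ν : ∀ i, Measure (Y i)} [∀ i, IsProbabilityMeasure (ν i)]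

theorem measureReal_univ_pi (A : ∀ i, Set (Y i)) :
    (Measure.pi ν).real (Set.univ.pi A) = ∏ i, (ν i).real (A i) := by
  simp [measureReal_def, Measure.pi_pi, ENNReal.toReal_prod]

theorem tendsto_cesaro_pi_box {R : ∀ i, Y i → Y i} (hR : ∀ i, CesaroMixing (ν i) (R i))
    {A B : ∀ i, Set (Y i)} (hA : ∀ i, MeasurableSet (A i)) (hB : ∀ i, MeasurableSet (B i)) :
    Tendsto (fun N : ℕ => (N : ℝ)⁻¹ * ∑ j ∈ Finset.range N,
      (Measure.pi ν).real ((Pi.map R)^[j] ⁻¹' (Set.univ.pi A) ∩ Set.univ.pi B))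
      atTop (𝓝 ((Measure.pi ν).real (Set.univ.pi A) * (Measure.pi ν).real (Set.univ.pi B))) := by
  have hpre (j : ℕ) : (Pi.map R)^[j] ⁻¹' (Set.univ.pi A) ∩ Set.univ.pi B =
      Set.univ.pi fun i => (R i)^[j] ⁻¹' A i ∩ B i := by
    rw [Pi.map_iterate, Set.pi_inter_distrib]
    rfl
  simp only [hpre, measureReal_univ_pi, ← Finset.prod_mul_distrib]
  have hsum : Tendsto (fun N : ℕ => ∑ i, (N : ℝ)⁻¹ * ∑ j ∈ Finset.range N,
      |(ν i).real ((R i)^[j] ⁻¹' A i ∩ B i) - (ν i).real (A i) * (ν i).real (B i)|)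
      atTop (𝓝 0) := by
    simpa using tendsto_finsetSum Finset.univ fun i _ => hR i (A i) (B i) (hA i) (hB i)
  rw [tendsto_iff_norm_sub_tendsto_zero]
  refine squeeze_zero' (Eventually.of_forall fun _ => norm_nonneg _) ?_ hsum
  filter_upwards [eventually_ne_atTop 0] with N hN
  set c : ℝ := ∏ i, (ν i).real (A i) * (ν i).real (B i)
  calc ‖(N : ℝ)⁻¹ * ∑ j ∈ Finset.range N, ∏ i, (ν i).real ((R i)^[j] ⁻¹' A i ∩ B i) - c‖
      = (N : ℝ)⁻¹ *
          |∑ j ∈ Finset.range N, (∏ i, (ν i).real ((R i)^[j] ⁻¹' A i ∩ B i) - c)| := by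
        rw [← Nat.abs_cast N, ← abs_inv, ← abs_mul, Finset.sum_sub_distrib, mul_sub,
          Real.norm_eq_abs]
        simp [hN]
    _ ≤ (N : ℝ)⁻¹ * ∑ j ∈ Finset.range N, ∑ i,
          |(ν i).real ((R i)^[j] ⁻¹' A i ∩ B i) - (ν i).real (A i) * (ν i).real (B i)| := by
        refine mul_le_mul_of_nonneg_left ?_ (by positivity)
        refine (Finset.abs_sum_le_sum_abs _ _).trans (Finset.sum_le_sum fun j _ => ?_)
        exact abs_prod_sub_prod_le_sum _ (fun i => measureReal_nonneg)
          (fun i => measureReal_le_one) (fun i => by positivity)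
          (fun i => mul_le_one₀ measureReal_le_one measureReal_nonneg measureReal_le_one)
    _ = _ := by rw [Finset.sum_comm, Finset.mul_sum]

end Pi

section PiSystem

variable {Z : Type*} [mZ : MeasurableSpace Z] {m : Measure Z} [IsProbabilityMeasure m] {f : Z → Z}
  {𝒮 : Set (Set Z)}

theorem hasSum_measureReal_inter {B : ℕ → Set Z} (hd : Pairwise (Function.onFun Disjoint B))
    (hB : ∀ i, MeasurableSet (B i)) {C : Set Z} (hC : MeasurableSet C) :
    HasSum (fun i => m.real (C ∩ B i)) (m.real (C ∩ ⋃ i, B i)) := by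
  have hunion : m (C ∩ ⋃ i, B i) = ∑' i, m (C ∩ B i) := by
    rw [Set.inter_iUnion]
    exact measure_iUnion
      (fun i j hij => (hd hij).mono Set.inter_subset_right Set.inter_subset_right)
      fun i => hC.inter (hB i)
  rw [measureReal_def, hunion, ENNReal.tsum_toReal_eq fun _ => measure_ne_top _ _]
  exact ENNReal.hasSum_toReal (hunion ▸ measure_ne_top _ _)

theorem tendsto_cesaro_inter_of_piSystem (hf : MeasurePreserving f m m) {A : Set Z}
    (hA : MeasurableSet A) (hgen : mZ = MeasurableSpace.generateFrom 𝒮) (hpi : IsPiSystem 𝒮)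
    (h : ∀ B ∈ 𝒮, Tendsto (fun N : ℕ => (N : ℝ)⁻¹ * ∑ j ∈ Finset.range N,
      m.real (f^[j] ⁻¹' A ∩ B)) atTop (𝓝 (m.real A * m.real B)))
    {B : Set Z} (hB : MeasurableSet B) :
    Tendsto (fun N : ℕ => (N : ℝ)⁻¹ * ∑ j ∈ Finset.range N,
      m.real (f^[j] ⁻¹' A ∩ B)) atTop (𝓝 (m.real A * m.real B)) := by
  induction B, hB using MeasurableSpace.induction_on_inter hgen hpi with
  | empty => simp
  | basic B hB => exact h B hB
  | compl B hB ih =>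
    have hcompl (j : ℕ) : m.real (f^[j] ⁻¹' A ∩ Bᶜ) = m.real A - m.real (f^[j] ⁻¹' A ∩ B) := by
      rw [← (hf.iterate j).measureReal_preimage hA.nullMeasurableSet, ← Set.sdiff_eq,
        eq_sub_iff_add_eq', measureReal_inter_add_sdiff hB]
    have hlim := ih.const_sub (m.real A)
    rw [← mul_one_sub, ← probReal_compl_eq_one_sub hB] at hlim
    refine hlim.congr' ?_
    filter_upwards [eventually_ne_atTop 0] with N hN
    have hN : (N : ℝ) ≠ 0 := Nat.cast_ne_zero.2 hN
    simp only [hcompl, Finset.sum_sub_distrib, Finset.sum_const, Finset.card_range, nsmul_eq_mul]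
    field_simp
  | iUnion B hd hB ih =>
    have hsumB : HasSum (fun i => m.real (B i)) (m.real (⋃ i, B i)) := by
      simpa using hasSum_measureReal_inter (m := m) hd hB MeasurableSet.univ
    have hbound (N : ℕ) (i : ℕ) :
        ‖(N : ℝ)⁻¹ * ∑ j ∈ Finset.range N, m.real (f^[j] ⁻¹' A ∩ B i)‖ ≤ m.real (B i) := by
      rw [Real.norm_of_nonneg (by positivity)]
      refine inv_mul_le_of_le_mul₀ N.cast_nonneg measureReal_nonneg ?_
      calc _ ≤ ∑ _j ∈ Finset.range N, m.real (B i) :=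
            Finset.sum_le_sum fun j _ => measureReal_mono Set.inter_subset_right
        _ = _ := by simp
    have hlim := tendsto_tsum_of_dominated_convergence hsumB.summable ih
      (Eventually.of_forall hbound)
    rw [(hsumB.mul_left (m.real A)).tsum_eq] at hlim
    refine hlim.congr fun N => HasSum.tsum_eq (HasSum.mul_left _ (hasSum_sum fun j _ => ?_))
    exact hasSum_measureReal_inter hd hB ((hf.iterate j).measurable hA)

theorem measure_eq_zero_or_compl_of_piSystem (hgen : mZ = MeasurableSpace.generateFrom 𝒮)
    (hpi : IsPiSystem 𝒮) {D : Set Z} (hD : MeasurableSet D)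
    (h : ∀ A ∈ 𝒮, m.real (A ∩ D) = m.real A * m.real D) : m D = 0 ∨ m Dᶜ = 0 := by
  have hrestrict : m.restrict D = m D • m := by
    refine ext_of_generate_finite 𝒮 hgen hpi (fun A hA => ?_) (by simp)
    have hAm : MeasurableSet A := hgen ▸ MeasurableSpace.measurableSet_generateFrom hA
    rw [Measure.restrict_apply hAm, Measure.smul_apply, smul_eq_mul, mul_comm,
      ← ENNReal.toReal_eq_toReal_iff' (measure_ne_top _ _)
        (ENNReal.mul_ne_top (measure_ne_top _ _) (measure_ne_top _ _)), ENNReal.toReal_mul]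
    exact h A hA
  have hcompl := congrArg (fun ρ : Measure Z => ρ Dᶜ) hrestrict
  simpa [Measure.restrict_apply hD.compl, eq_comm] using hcompl

theorem ergodic_of_tendsto_cesaro_piSystem (hf : MeasurePreserving f m m)
    (hgen : mZ = MeasurableSpace.generateFrom 𝒮) (hpi : IsPiSystem 𝒮)
    (h : ∀ A ∈ 𝒮, ∀ B ∈ 𝒮, Tendsto (fun N : ℕ => (N : ℝ)⁻¹ * ∑ j ∈ Finset.range N,
      m.real (f^[j] ⁻¹' A ∩ B)) atTop (𝓝 (m.real A * m.real B))) : Ergodic f m := by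
  refine ⟨hf, ⟨fun D hD hinv => ?_⟩⟩
  have independent (A : Set Z) (hA : A ∈ 𝒮) : m.real (A ∩ D) = m.real A * m.real D := by
    have hAm : MeasurableSet A := hgen ▸ MeasurableSpace.measurableSet_generateFrom hA
    refine tendsto_nhds_unique (tendsto_const_nhds.cesaro (l := m.real (A ∩ D))) ?_
    refine (tendsto_cesaro_inter_of_piSystem hf hAm hgen hpi (h A hA) hD).congr fun N => ?_
    refine congrArg _ (Finset.sum_congr rfl fun j _ => ?_)
    have hinvj : f^[j] ⁻¹' D = D := by
      rw [Set.preimage_iterate_eq]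
      exact Function.iterate_fixed hinv j
    conv_lhs => rw [← hinvj, ← Set.preimage_inter]
    exact (hf.iterate j).measureReal_preimage (hAm.inter hD).nullMeasurableSet
  rw [eventuallyConst_set', ae_eq_univ, ae_eq_empty]
  exact measure_eq_zero_or_compl_of_piSystem hgen hpi hD independent

end PiSystem

theorem ergodic_piMap_of_cesaroMixing {ι : Type*} [Fintype ι] {Y : ι → Type*}
    [∀ i, MeasurableSpace (Y i)] {ν : ∀ i, Measure (Y i)} [∀ i, IsProbabilityMeasure (ν i)]
    {R : ∀ i, Y i → Y i} (hR : ∀ i, CesaroMixing (ν i) (R i))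
    (hRm : ∀ i, MeasurePreserving (R i) (ν i) (ν i)) :
    Ergodic (Pi.map R) (Measure.pi ν) := by
  refine ergodic_of_tendsto_cesaro_piSystem (measurePreserving_pi ν ν hRm) generateFrom_pi.symm
    isPiSystem_pi ?_
  rintro _ ⟨A, hA, rfl⟩ _ ⟨B, hB, rfl⟩
  exact tendsto_cesaro_pi_box hR (fun i => hA i trivial) fun i => hB i trivial

/-! ### Joinings along arithmetic progressions -/

theorem eq_prod_of_measurePreserving_id_prodMap {X Y : Type*} [MeasurableSpace X]
    [MeasurableSpace Y] {ρ : Measure (X × Y)} [IsProbabilityMeasure ρ] {R : Y → Y}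
    (hρ : MeasurePreserving (Prod.map id R) ρ ρ) (hR : Ergodic R ρ.snd) :
    ρ = ρ.fst.prod ρ.snd := by
  refine (Measure.prod_eq fun A B hA hB => ?_).symm
  have hEm : MeasurableSet (Prod.fst ⁻¹' A : Set (X × Y)) := measurable_fst hA
  have hinv : MeasurePreserving R (ρ.restrict (Prod.fst ⁻¹' A)).snd
      (ρ.restrict (Prod.fst ⁻¹' A)).snd :=
    (measurable_snd.measurePreserving _).of_semiconj (hρ.restrict_preimage hEm)
      (fun _ => rfl) hR.measurable
  have hac : (ρ.restrict (Prod.fst ⁻¹' A)).snd ≪ ρ.snd :=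
    (Measure.absolutelyContinuous_of_le Measure.restrict_le_self).map measurable_snd
  obtain ⟨c, hc⟩ := hR.eq_smul_of_absolutelyContinuous hinv hac
  have hcA : ρ.fst A = c := by
    have huniv := congrArg (fun κ : Measure Y => κ Set.univ) hc
    simpa [Measure.snd_univ, Measure.fst_apply hA] using huniv
  have hcB := congrArg (fun κ : Measure Y => κ B) hc
  rw [Measure.snd_apply hB, Measure.restrict_apply (measurable_snd hB), Measure.smul_apply,
    smul_eq_mul, ← hcA, Set.inter_comm] at hcB
  rwa [Set.prod_eq]

theorem eq_pi_of_measurePreserving_piMap {n : ℕ} {Y : Type*} [MeasurableSpace Y] {ν : Measure Y}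
    [IsProbabilityMeasure ν] {ρ : Measure (Fin (n + 1) → Y)} [IsProbabilityMeasure ρ]
    {R : Fin n → Y → Y} (hρ : MeasurePreserving (Pi.map (Fin.cons id R : Fin (n + 1) → Y → Y)) ρ ρ)
    (hR : Ergodic (Pi.map R) (Measure.pi fun _ => ν))
    (hfst : MeasurePreserving (fun x => x 0) ρ ν)
    (hsnd : MeasurePreserving Fin.tail ρ (Measure.pi fun _ => ν)) :
    ρ = Measure.pi fun _ => ν := by
  let φ := MeasurableEquiv.piFinSuccAbove (fun _ : Fin (n + 1) => Y) 0
  have hφ : MeasurePreserving φ ρ (ρ.map φ) := φ.measurable.measurePreserving ρ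
  have : IsProbabilityMeasure (ρ.map φ) :=
    Measure.isProbabilityMeasure_map φ.measurable.aemeasurable
  have hfst' : (ρ.map φ).fst = ν :=
    (Measure.map_map measurable_fst φ.measurable).trans hfst.map_eq
  have hsnd' : (ρ.map φ).snd = Measure.pi fun _ => ν :=
    (Measure.map_map measurable_snd φ.measurable).trans hsnd.map_eq
  have hid : MeasurePreserving (Prod.map id (Pi.map R)) (ρ.map φ) (ρ.map φ) :=
    hφ.of_semiconj hρ (fun _ => rfl) (measurable_id.prodMap hR.measurable)
  have hprod := eq_prod_of_measurePreserving_id_prodMap hid (by rwa [hsnd'])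
  rw [hfst', hsnd', ← (measurePreserving_piFinSuccAbove (fun _ => ν) 0).map_eq] at hprod
  exact φ.map_measurableEquiv_injective hprod

section ArithmeticProgression

variable {Y : Type*} [MeasurableSpace Y] {T : Y → Y}

theorem measurable_piMap_iterate {ι : Type*} (hT : Measurable T) (e : ι → ℕ) :
    Measurable (Pi.map fun i => T^[e i]) :=
  measurable_pi_lambda _ fun i => (hT.iterate _).comp (measurable_pi_apply i)

theorem measurePreserving_piMap_iterate_sub {ι : Type*} {ρ : Measure (ι → Y)} (hT : Measurable T)
    (hτ : MeasurePreserving (Pi.map fun _ => T) ρ ρ) {e : ι → ℕ}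
    (hσ : MeasurePreserving (Pi.map fun i => T^[e i]) ρ ρ) {a : ℕ} (ha : ∀ i, a ≤ e i) :
    MeasurePreserving (Pi.map fun i => T^[e i - a]) ρ ρ := by
  have hdiag : MeasurePreserving (Pi.map fun _ => T^[a]) ρ ρ := by
    simpa only [Pi.map_iterate] using hτ.iterate a
  have hcomp : (Pi.map fun i => T^[e i - a]) ∘ (Pi.map fun _ => T^[a]) =
      Pi.map fun i => T^[e i] := by
    ext x i
    simp only [Function.comp_apply, Pi.map_apply, ← Function.iterate_add_apply,
      Nat.sub_add_cancel (ha i)]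
  have hmap := MeasurePreserving.map_of_comp (hcomp ▸ hσ) (measurable_piMap_iterate hT _)
    hdiag.measurable
  rwa [hdiag.map_eq] at hmap

theorem eq_pi_of_measurePreserving {ν : Measure Y} [IsProbabilityMeasure ν]
    (hT : MeasurePreserving T ν ν)
    (hu : ∀ ρ : Measure Y, IsProbabilityMeasure ρ → MeasurePreserving T ρ ρ → ρ = ν)
    (hmix : CesaroMixing ν T) {n : ℕ} {e : Fin n → ℕ} (he : StrictMono e)
    {ρ : Measure (Fin n → Y)} [IsProbabilityMeasure ρ]
    (hτ : MeasurePreserving (Pi.map fun _ => T) ρ ρ)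
    (hσ : MeasurePreserving (Pi.map fun i => T^[e i]) ρ ρ) : ρ = Measure.pi fun _ => ν := by
  induction n with
  | zero =>
    refine Measure.ext fun s _ => ?_
    rcases s.eq_empty_or_nonempty with rfl | hs
    · simp
    · rw [Subsingleton.eq_univ_of_nonempty hs, measure_univ, measure_univ]
  | succ n ih =>
    have hzero : MeasurePreserving (fun x : Fin (n + 1) → Y => x 0) ρ (ρ.map fun x => x 0) :=
      (measurable_pi_apply 0).measurePreserving ρ
    have htail_meas : Measurable (Fin.tail : (Fin (n + 1) → Y) → Fin n → Y) :=
      measurable_pi_lambda _ fun i => measurable_pi_apply i.succ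
    have htail : MeasurePreserving Fin.tail ρ (ρ.map Fin.tail) := htail_meas.measurePreserving ρ
    have hfst : ρ.map (fun x => x 0) = ν :=
      hu _ (Measure.isProbabilityMeasure_map hzero.aemeasurable)
        (hzero.of_semiconj hτ (fun _ => rfl) hT.measurable)
    have : IsProbabilityMeasure (ρ.map Fin.tail) :=
      Measure.isProbabilityMeasure_map htail.aemeasurable
    have hsnd : ρ.map Fin.tail = Measure.pi fun _ => ν :=
      ih (he.comp Fin.strictMono_succ)
        (htail.of_semiconj hτ (fun _ => rfl) (measurable_piMap_iterate hT.measurable fun _ => 1))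
        (htail.of_semiconj hσ (fun _ => rfl) (measurable_piMap_iterate hT.measurable _))
    have hdiff := measurePreserving_piMap_iterate_sub hT.measurable hτ hσ
      fun i => he.monotone (Fin.zero_le i)
    refine eq_pi_of_measurePreserving_piMap (R := fun i => T^[e i.succ - e 0]) ?_
      (ergodic_piMap_of_cesaroMixing
        (fun i => hmix.iterate (Nat.sub_pos_of_lt (he (Fin.succ_pos i)))) fun i => hT.iterate _)
      (hfst ▸ hzero) (hsnd ▸ htail)
    convert hdiff using 2
    ext i : 1
    cases i using Fin.cases <;> simp

end ArithmeticProgression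

/-! ### Invariant measures on orbit closures -/

/-- The uniform probability distribution on the points `u i`, `i ∈ s`, counted with multiplicity. -/
noncomputable def empiricalMeasure {ι Z : Type*} [MeasurableSpace Z] (s : Finset ι) (u : ι → Z) :
    Measure Z :=
  (s.card : ENNReal)⁻¹ • ∑ i ∈ s, Measure.dirac (u i)

section EmpiricalMeasure

variable {ι Z : Type*} [MeasurableSpace Z] {s : Finset ι} {u : ι → Z}

theorem empiricalMeasure_eq_one (hs : s.Nonempty) {C : Set Z} (hC : MeasurableSet C)
    (hu : ∀ i ∈ s, u i ∈ C) : empiricalMeasure s u C = 1 := by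
  have hdirac (i : ι) (hi : i ∈ s) : Measure.dirac (u i) C = 1 := by
    simp [Measure.dirac_apply' _ hC, hu i hi]
  rw [empiricalMeasure, Measure.smul_apply, Measure.finsetSum_apply, Finset.sum_congr rfl hdirac,
    Finset.sum_const, nsmul_one, smul_eq_mul]
  exact ENNReal.inv_mul_cancel (by simpa using hs.ne_empty) (ENNReal.natCast_ne_top _)

theorem isProbabilityMeasure_empiricalMeasure (hs : s.Nonempty) :
    IsProbabilityMeasure (empiricalMeasure s u) :=
  ⟨empiricalMeasure_eq_one hs MeasurableSet.univ fun _ _ => trivial⟩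

theorem integral_empiricalMeasure {f : Z → ℝ} (hf : StronglyMeasurable f) :
    ∫ z, f z ∂(empiricalMeasure s u) = (s.card : ℝ)⁻¹ * ∑ i ∈ s, f (u i) := by
  have integrable_dirac (i : ι) : Integrable f (Measure.dirac (u i)) :=
    ⟨hf.aestronglyMeasurable, by
      rw [hasFiniteIntegral_iff_enorm, lintegral_dirac' _ hf.enorm]
      exact enorm_lt_top⟩
  rw [empiricalMeasure, integral_smul_measure,
    integral_finsetSum_measure fun i _ => integrable_dirac i]
  simp [integral_dirac' _ _ hf]

end EmpiricalMeasure

theorem abs_sum_comp_sub_sum_le {ι : Type*} [DecidableEq ι] (s : Finset ι) {e : ι → ι}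
    (he : Function.Injective e) {f : ι → ℝ} {C : ℝ} (hf : ∀ i, |f i| ≤ C) :
    |∑ i ∈ s, f (e i) - ∑ i ∈ s, f i| ≤ 2 * C * (s.image e \ s).card := by
  have abs_sum_le (t : Finset ι) : |∑ i ∈ t, f i| ≤ t.card * C := by
    rw [← nsmul_eq_mul]
    exact (Finset.abs_sum_le_sum_abs _ _).trans (Finset.sum_le_card_nsmul _ _ _ fun i _ => hf i)
  have hcard : (s \ s.image e).card = (s.image e \ s).card :=
    Finset.card_sdiff_comm (Finset.card_image_of_injective s he).symm
  rw [← Finset.sum_image (f := f) he.injOn, ← Finset.sum_sdiff_sub_sum_sdiff]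
  calc |∑ i ∈ s.image e \ s, f i - ∑ i ∈ s \ s.image e, f i|
      ≤ |∑ i ∈ s.image e \ s, f i| + |∑ i ∈ s \ s.image e, f i| := abs_sub _ _
    _ ≤ (s.image e \ s).card * C + (s \ s.image e).card * C :=
      add_le_add (abs_sum_le _) (abs_sum_le _)
    _ = 2 * C * (s.image e \ s).card := by rw [hcard]; ring

section KrylovBogoliubov

variable {Z : Type*} [TopologicalSpace Z] [CompactSpace Z] [TopologicalSpace.MetrizableSpace Z]
  [MeasurableSpace Z] [BorelSpace Z]

theorem exists_invariant_measure_of_folner {ι : Type*} [DecidableEq ι] {s : ℕ → Finset ι}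
    (hs : ∀ N, (s N).Nonempty) (u : ι → Z) :
    ∃ p : Measure Z, IsProbabilityMeasure p ∧ p (closure (Set.range u)) = 1 ∧
      ∀ (W : Z → Z) (e : ι → ι), Continuous W → Function.Injective e → (∀ i, W (u i) = u (e i)) →
        Tendsto (fun N => (((s N).image e \ s N).card : ℝ) / (s N).card) atTop (𝓝 0) →
        MeasurePreserving W p p := by
  let _ : MetricSpace Z := TopologicalSpace.metrizableSpaceMetric Z
  let m (N : ℕ) : ProbabilityMeasure Z :=
    ⟨empiricalMeasure (s N) u, isProbabilityMeasure_empiricalMeasure (hs N)⟩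
  let p : ProbabilityMeasure Z := ((hyperfilter ℕ).map m).lim
  have hp : Tendsto m (hyperfilter ℕ : Filter ℕ) (𝓝 p) := ((hyperfilter ℕ).map m).le_nhds_lim
  refine ⟨p, inferInstance, le_antisymm prob_le_one ?_, fun W e hW he hWe hfolner => ?_⟩
  · have hclosed : IsClosed (closure (Set.range u)) := isClosed_closure
    have hm (N : ℕ) : (m N : Measure Z) (closure (Set.range u)) = 1 :=
      empiricalMeasure_eq_one (hs N) hclosed.measurableSet
        fun i _ => subset_closure (Set.mem_range_self i)
    simpa [hm] using ProbabilityMeasure.limsup_measure_closed_le_of_tendsto hp hclosed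
  · have : IsProbabilityMeasure ((p : Measure Z).map W) :=
      Measure.isProbabilityMeasure_map hW.measurable.aemeasurable
    refine ⟨hW.measurable, ext_of_forall_integral_eq_of_IsFiniteMeasure fun f => ?_⟩
    rw [integral_map hW.measurable.aemeasurable f.continuous.aestronglyMeasurable, ← sub_eq_zero]
    have hlim := ProbabilityMeasure.tendsto_iff_forall_integral_tendsto.1 hp
    refine tendsto_nhds_unique ((hlim (f.compContinuous ⟨W, hW⟩)).sub (hlim f)) ?_
    have hbound := (hfolner.const_mul (2 * ‖f‖)).mono_left Nat.hyperfilter_le_atTop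
    rw [mul_zero] at hbound
    refine squeeze_zero_norm (fun N => ?_) hbound
    have hsum := abs_sum_comp_sub_sum_le (s N) he (f := fun i => f (u i))
      fun i => f.norm_coe_le_norm (u i)
    simp only [m, ProbabilityMeasure.coe_mk]
    rw [integral_empiricalMeasure (BoundedContinuousFunction.continuous _).stronglyMeasurable,
      integral_empiricalMeasure f.continuous.stronglyMeasurable, ← mul_sub, Real.norm_eq_abs,
      abs_mul, abs_of_nonneg (by positivity), ← mul_div_assoc, div_eq_inv_mul]
    simp only [BoundedContinuousFunction.compContinuous_apply, ContinuousMap.coe_mk, hWe]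
    gcongr

theorem tendsto_card_image_square_sdiff_div {e : ℕ × ℕ → ℕ × ℕ}
    (he : ∀ N, (((Finset.range (N + 1) ×ˢ Finset.range (N + 1)).image e) \
      (Finset.range (N + 1) ×ˢ Finset.range (N + 1))).card ≤ N + 1) :
    Tendsto (fun N : ℕ => ((((Finset.range (N + 1) ×ˢ Finset.range (N + 1)).image e) \
        (Finset.range (N + 1) ×ˢ Finset.range (N + 1))).card : ℝ) /
      (Finset.range (N + 1) ×ˢ Finset.range (N + 1)).card) atTop (𝓝 0) := by
  refine squeeze_zero (fun N => by positivity) (fun N => ?_)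
    (tendsto_one_div_add_atTop_nhds_zero_nat (𝕜 := ℝ))
  have hN : (0 : ℝ) < N + 1 := N.cast_add_one_pos
  rw [Finset.card_product, Finset.card_range, div_le_div_iff₀ (by positivity) hN]
  push_cast
  rw [one_mul]
  gcongr
  exact_mod_cast he N

theorem exists_invariant_measure_orbit_closure {U V : Z → Z} (hU : Continuous U)
    (hV : Continuous V) (hc : Function.Commute U V) (z : Z) :
    ∃ p : Measure Z, IsProbabilityMeasure p ∧ MeasurePreserving U p p ∧ MeasurePreserving V p p ∧
      p (closure (Set.range fun ij : ℕ × ℕ => U^[ij.1] (V^[ij.2] z))) = 1 := by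
  let box (N : ℕ) : Finset (ℕ × ℕ) := Finset.range (N + 1) ×ˢ Finset.range (N + 1)
  obtain ⟨p, hp, hsupp, hinv⟩ := exists_invariant_measure_of_folner (s := box)
    (fun N => Finset.nonempty_range_add_one.product Finset.nonempty_range_add_one)
    fun ij => U^[ij.1] (V^[ij.2] z)
  refine ⟨p, hp, ?_, ?_, hsupp⟩
  · refine hinv U (Prod.map Nat.succ id) hU (Nat.succ_injective.prodMap Function.injective_id)
      (fun ij => (Function.iterate_succ_apply' U _ _).symm)
      (tendsto_card_image_square_sdiff_div fun N => ?_)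
    have hsub : (box N).image (Prod.map Nat.succ id) \ box N ⊆
        {N + 1} ×ˢ Finset.range (N + 1) := by
      intro ⟨a, b⟩ hab
      simp only [Finset.mem_sdiff, Finset.mem_image, Finset.mem_product, Finset.mem_range,
        Finset.mem_singleton, Prod.exists, Prod.map_apply, id_eq, Prod.mk.injEq, box] at hab ⊢
      omega
    simpa using Finset.card_le_card hsub
  · refine hinv V (Prod.map id Nat.succ) hV (Function.injective_id.prodMap Nat.succ_injective)
      (fun ij => ?_) (tendsto_card_image_square_sdiff_div fun N => ?_)
    · change V (U^[ij.1] (V^[ij.2] z)) = U^[ij.1] (V^[ij.2 + 1] z)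
      rw [Function.iterate_succ_apply', (hc.iterate_left ij.1).eq]
    have hsub : (box N).image (Prod.map id Nat.succ) \ box N ⊆
        Finset.range (N + 1) ×ˢ {N + 1} := by
      intro ⟨a, b⟩ hab
      simp only [Finset.mem_sdiff, Finset.mem_image, Finset.mem_product, Finset.mem_range,
        Finset.mem_singleton, Prod.exists, Prod.map_apply, id_eq, Prod.mk.injEq, box] at hab ⊢
      omega
    simpa using Finset.card_le_card hsub

theorem dense_of_uniquelyErgodic {U V : Z → Z} (hU : Continuous U) (hV : Continuous V)
    (hc : Function.Commute U V) {ν : Measure Z} [ν.IsOpenPosMeasure]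
    (hu : ∀ ρ : Measure Z, IsProbabilityMeasure ρ → MeasurePreserving U ρ ρ →
      MeasurePreserving V ρ ρ → ρ = ν) {A : Set Z} {z : Z}
    (hA : ∀ i j : ℕ, U^[i] (V^[j] z) ∈ A) : Dense A := by
  obtain ⟨p, hp, hpU, hpV, hone⟩ := exists_invariant_measure_orbit_closure hU hV hc z
  obtain rfl := hu p hp hpU hpV
  have hcompl := (prob_compl_eq_zero_iff isClosed_closure.measurableSet).2 hone
  rw [isClosed_closure.isOpen_compl.measure_eq_zero_iff p, Set.compl_empty_iff,
    ← dense_iff_closure_eq] at hcompl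
  exact hcompl.mono (Set.range_subset_iff.2 fun ij : ℕ × ℕ => hA ij.1 ij.2)

end KrylovBogoliubov

/-! ### Strict ergodicity of a uniquely ergodic system and of its arithmetic progressions -/

section StrictErgodicity

variable {Y : Type*} [TopologicalSpace Y]

theorem homeo_pow_apply (S : Y ≃ₜ Y) (n : ℕ) (y : Y) : (S ^ n : Y ≃ₜ Y) y = S^[n] y := by
  induction n generalizing y with
  | zero => rfl
  | succ n ih =>
    rw [pow_succ, Function.iterate_succ_apply, ← ih]
    rfl

theorem iterate_mem_grpOrbit {gens : Set (Y ≃ₜ Y)} {U V : Y ≃ₜ Y} (hU : U ∈ gens) (hV : V ∈ gens)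
    (i j : ℕ) (y : Y) : U^[i] (V^[j] y) ∈ grpOrbit gens y := by
  refine ⟨U ^ i * V ^ j, mul_mem (pow_mem (Subgroup.subset_closure hU) _)
    (pow_mem (Subgroup.subset_closure hV) _), ?_⟩
  rw [← homeo_pow_apply, ← homeo_pow_apply]
  rfl

theorem coe_sigmaHomeo (S : Y ≃ₜ Y) (d : ℕ) :
    ⇑(sigmaHomeo S d) = Pi.map fun i : Fin d => S^[(i : ℕ) + 1] :=
  funext fun x => funext fun i => homeo_pow_apply S ((i : ℕ) + 1) (x i)

theorem commute_tauHomeo_sigmaHomeo (S : Y ≃ₜ Y) (d : ℕ) :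
    Function.Commute (tauHomeo S d) (sigmaHomeo S d) := by
  rw [coe_sigmaHomeo]
  exact fun x => funext fun i => (Function.Commute.self_iterate (⇑S) _).eq (x i)

variable [CompactSpace Y] [TopologicalSpace.MetrizableSpace Y] [MeasurableSpace Y] [BorelSpace Y]
  {S : Y ≃ₜ Y} {ν : Measure Y} [IsProbabilityMeasure ν] [ν.IsOpenPosMeasure]

theorem strictlyErgodicHomeo_of_uniquelyErgodic (hS : MeasurePreserving S ν ν)
    (hu : ∀ ρ : Measure Y, IsProbabilityMeasure ρ → MeasurePreserving S ρ ρ → ρ = ν) :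
    StrictlyErgodicHomeo S := by
  refine ⟨fun y => ?_, ν, ⟨inferInstance, hS⟩, fun ρ hρ => hu ρ hρ.1 hρ.2⟩
  refine dense_of_uniquelyErgodic (z := y) S.continuous continuous_id Function.Commute.id_right
    (fun ρ hρ hSρ _ => hu ρ hρ hSρ) fun i j => ⟨i, ?_⟩
  simp [homeo_pow_apply]

theorem strictlyErgodicOn_apGens (hS : MeasurePreserving S ν ν)
    (hu : ∀ ρ : Measure Y, IsProbabilityMeasure ρ → MeasurePreserving S ρ ρ → ρ = ν)
    (hmix : CesaroMixing ν S) (d : ℕ) : StrictlyErgodicOn (apGens S d) Set.univ := by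
  have : SecondCountableTopology Y := by
    let _ : MetricSpace Y := TopologicalSpace.metrizableSpaceMetric Y
    infer_instance
  let m : Measure (Fin d → Y) := Measure.pi fun _ => ν
  have htau : MeasurePreserving (tauHomeo S d) m m := measurePreserving_pi _ _ fun _ => hS
  have hsigma : MeasurePreserving (sigmaHomeo S d) m m := by
    rw [coe_sigmaHomeo]
    exact measurePreserving_pi _ _ fun i => hS.iterate _
  have huniq (ρ : Measure (Fin d → Y)) (hρ : IsProbabilityMeasure ρ)
      (hρτ : MeasurePreserving (tauHomeo S d) ρ ρ)
      (hρσ : MeasurePreserving (sigmaHomeo S d) ρ ρ) : ρ = m :=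
    eq_pi_of_measurePreserving hS hu hmix (e := fun i => (i : ℕ) + 1)
      (fun i j hij => Nat.succ_lt_succ hij) hρτ (coe_sigmaHomeo S d ▸ hρσ)
  have hτmem : tauHomeo S d ∈ apGens S d := Set.mem_insert _ _
  have hσmem : sigmaHomeo S d ∈ apGens S d := Set.mem_insert_of_mem _ rfl
  refine ⟨fun x _ => ?_, m, ⟨inferInstance, measure_univ, ?_⟩, fun ρ ⟨hρ, _, hinv⟩ =>
    huniq ρ hρ (hinv _ hτmem) (hinv _ hσmem)⟩
  · exact (dense_of_uniquelyErgodic (tauHomeo S d).continuous (sigmaHomeo S d).continuous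
      (commute_tauHomeo_sigmaHomeo S d) huniq
      fun i j => iterate_mem_grpOrbit hτmem hσmem i j x).closure_eq
  · rintro g (rfl | rfl)
    exacts [htau, hsigma]

theorem strictlyErgodicOn_closure_grpOrbit (hS : MeasurePreserving S ν ν)
    (hu : ∀ ρ : Measure Y, IsProbabilityMeasure ρ → MeasurePreserving S ρ ρ → ρ = ν)
    (hmix : CesaroMixing ν S) (d : ℕ) (y : Y) :
    StrictlyErgodicOn (apGens S d) (closure (grpOrbit (apGens S d) fun _ : Fin d => y)) := by
  have h := strictlyErgodicOn_apGens hS hu hmix d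
  rwa [h.1 _ trivial]

end StrictErgodicity

/-! ### Marker sets -/

/-- Every orbit segment of length `H` visits `B`. -/
def GapBound {X : Type*} (f : X → X) (B : Set X) (H : ℕ) : Prop :=
  ∀ x, ∃ i < H, f^[i] x ∈ B

/-- Returns to `B` take at least `n` steps. -/
def Separated {X : Type*} (f : X → X) (B : Set X) (n : ℕ) : Prop :=
  ∀ x ∈ B, ∀ i, 0 < i → i < n → f^[i] x ∉ B

/-- There are marker sets at all scales. No measure is involved: the gap bounds hold at every point,
and not just almost everywhere. -/
def HasMarkers {X : Type*} [MeasurableSpace X] (f : X → X) : Prop :=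
  ∀ L, 0 < L → ∃ M, MeasurableSet M ∧ GapBound f M (2 * L) ∧ Separated f M L

section SeparatedSets

variable {X : Type*} [MeasurableSpace X] {μ : Measure X} {f : X → X}

theorem exists_measurableSet_measure_lt [StandardBorelSpace X] [IsProbabilityMeasure μ]
    [NullSingletonClass μ] {ε : ENNReal} (hε : 0 < ε) :
    ∃ A, MeasurableSet A ∧ 0 < μ A ∧ μ A < ε := by
  by_contra! h
  let _ := upgradeStandardBorel X
  refine one_ne_zero (measure_univ (μ := μ) ▸ measure_null_of_locally_null _ fun x _ => ?_)
  obtain ⟨U, hxU, hU, hUε⟩ := Set.exists_isOpen_lt_of_lt (μ := μ) {x} ε (by simpa using hε)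
  refine ⟨U, by simpa using hU.mem_nhds (hxU rfl), ?_⟩
  by_contra hU0
  exact absurd (h U hU.measurableSet (pos_iff_ne_zero.2 hU0)) hUε.not_ge

omit [MeasurableSpace X] in
theorem Separated.mono {B : Set X} {m n : ℕ} (h : Separated f B n) (hmn : m ≤ n) :
    Separated f B m :=
  fun x hx i h0 hi => h x hx i h0 (hi.trans_le hmn)

theorem Separated.mul_measureReal_le [IsProbabilityMeasure μ] (hf : MeasurePreserving f μ μ)
    {B : Set X} (hB : MeasurableSet B) {n : ℕ} (h : Separated f B n) : n * μ.real B ≤ 1 := by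
  have disjoint_of_lt (i j : ℕ) (hij : i < j) (hj : j < n) :
      Disjoint (f^[i] ⁻¹' B) (f^[j] ⁻¹' B) := by
    refine Set.disjoint_left.2 fun x hx hx' => h _ hx (j - i) (by omega) (by omega) ?_
    rwa [← Function.iterate_add_apply, Nat.sub_add_cancel hij.le]
  have hdisj : Set.PairwiseDisjoint (Finset.range n : Set ℕ) fun i => f^[i] ⁻¹' B := by
    intro i hi j hj hij
    simp only [Finset.coe_range, Set.mem_Iio] at hi hj
    rcases lt_or_gt_of_ne hij with hlt | hgt
    exacts [disjoint_of_lt i j hlt hj, (disjoint_of_lt j i hgt hi).symm]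
  calc n * μ.real B = ∑ i ∈ Finset.range n, μ.real (f^[i] ⁻¹' B) := by
        simp [(hf.iterate _).measureReal_preimage hB.nullMeasurableSet]
    _ = μ.real (⋃ i ∈ Finset.range n, f^[i] ⁻¹' B) :=
        (measureReal_biUnion_finset hdisj fun i _ => (hf.measurable.iterate i) hB).symm
    _ ≤ 1 := measureReal_le_one

theorem measure_setOf_exists_lt_iterate_mem_le (hf : MeasurePreserving f μ μ) {A : Set X}
    (hA : MeasurableSet A) (L : ℕ) : μ {x | ∃ i < L, f^[i] x ∈ A} ≤ L * μ A := by
  have h : {x | ∃ i < L, f^[i] x ∈ A} = ⋃ i ∈ Finset.range L, f^[i] ⁻¹' A := by ext; simp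
  calc μ {x | ∃ i < L, f^[i] x ∈ A} ≤ ∑ i ∈ Finset.range L, μ (f^[i] ⁻¹' A) :=
        h ▸ measure_biUnion_finset_le _ _
    _ = L * μ A := by simp [(hf.iterate _).measure_preimage hA.nullMeasurableSet]

theorem measurableSet_setOf_exists_lt_iterate_mem (hf : Measurable f) {A : Set X}
    (hA : MeasurableSet A) (L : ℕ) : MeasurableSet {x | ∃ i < L, f^[i] x ∈ A} := by
  have h : {x | ∃ i < L, f^[i] x ∈ A} = ⋃ i ∈ Finset.range L, f^[i] ⁻¹' A := by ext; simp
  exact h ▸ Finset.measurableSet_biUnion _ fun i _ => (hf.iterate i) hA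

/-- If almost every point of `A` returned to `A` in at most `L` steps, then the set of points
visiting `A` within `L` steps would be invariant, although its measure lies strictly between `0`
and `1`. -/
theorem measure_diff_preimage_setOf_exists_lt_pos [IsProbabilityMeasure μ] (hf : Ergodic f μ)
    {A : Set X} (hA : MeasurableSet A) (hA0 : 0 < μ A) {L : ℕ} (hL : 0 < L) (hAL : L * μ A < 1) :
    0 < μ (A \ f ⁻¹' {x | ∃ i < L, f^[i] x ∈ A}) := by
  set U : Set X := {x | ∃ i < L, f^[i] x ∈ A} with hU
  by_contra! h
  have hUA : U ⊆ A ∪ f ⁻¹' U := by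
    rintro x ⟨_ | i, hi, hx⟩
    exacts [Or.inl hx, Or.inr ⟨i, by omega, hx⟩]
  have hinv : U ≤ᵐ[μ] f ⁻¹' U := by
    filter_upwards [measure_eq_zero_iff_ae_notMem.1 (nonpos_iff_eq_zero.1 h)] with x hx hxU
    exact (hUA hxU).elim (fun hxA => by_contra fun hx' => hx ⟨hxA, hx'⟩) id
  have hU1 : μ U < 1 :=
    (measure_setOf_exists_lt_iterate_mem_le hf.toMeasurePreserving hA L).trans_lt hAL
  have hU0 : 0 < μ U := hA0.trans_le (measure_mono fun x hx => ⟨0, hL, hx⟩)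
  rcases hf.ae_empty_or_univ_of_ae_le_preimage
    (measurableSet_setOf_exists_lt_iterate_mem hf.measurable hA L).nullMeasurableSet hinv with h | h
  · exact hU0.ne' (by rw [hU, measure_congr h, measure_empty])
  · exact hU1.ne (by rw [hU, measure_congr h, measure_univ])

theorem exists_separated_set [StandardBorelSpace X] [IsProbabilityMeasure μ]
    [NullSingletonClass μ] (hf : Ergodic f μ) {L : ℕ} (hL : 0 < L) :
    ∃ C, MeasurableSet C ∧ 0 < μ C ∧ Separated f C L := by
  have hL0 : (L : ENNReal) ≠ 0 := by simpa using hL.ne'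
  obtain ⟨A, hA, hA0, hAL⟩ : ∃ A, MeasurableSet A ∧ 0 < μ A ∧ μ A < (L : ENNReal)⁻¹ :=
    exists_measurableSet_measure_lt (by simp)
  have hAL' : L * μ A < 1 := by
    rwa [mul_comm, ← ENNReal.lt_div_iff_mul_lt (.inl hL0) (.inl (by simp)), one_div]
  refine ⟨A \ f ⁻¹' {x | ∃ i < L, f^[i] x ∈ A},
    hA.diff (hf.measurable (measurableSet_setOf_exists_lt_iterate_mem hf.measurable hA L)),
    measure_diff_preimage_setOf_exists_lt_pos hf hA hA0 hL hAL', ?_⟩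
  rintro x ⟨-, hx⟩ i hi0 hiL ⟨hi, -⟩
  refine hx ⟨i - 1, by omega, ?_⟩
  rwa [← Function.iterate_succ_apply, Nat.succ_eq_add_one, Nat.sub_add_cancel hi0]

end SeparatedSets

/-- The points `x` whose first entrance time `k ≥ 0` to `C` satisfies `L ∣ k + m`. -/
def entranceDvd {X : Type*} (f : X → X) (C : Set X) (L m : ℕ) : Set X :=
  {x | ∃ k, L ∣ k + m ∧ f^[k] x ∈ C ∧ ∀ j < k, f^[j] x ∉ C}

/-- The nearly `L`-periodic markers attached to a set `C`: on the way to `C`, one marks the points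
whose distance to the next visit of `C` is a multiple of `L`, except the points right after a
residual gap shorter than `L`. -/
def periodicMarkers {X : Type*} (f : X → X) (C : Set X) (L : ℕ) : Set X :=
  entranceDvd f C L 0 ∩ f ⁻¹' entranceDvd f C L 1

section PeriodicMarkers

variable {X : Type*} {f : X → X} {C : Set X} {L : ℕ}

theorem measurableSet_entranceDvd [MeasurableSpace X] (hf : Measurable f) (hC : MeasurableSet C)
    (L m : ℕ) : MeasurableSet (entranceDvd f C L m) := by
  have : entranceDvd f C L m = ⋃ k : ℕ, ⋃ _ : L ∣ k + m,
      (f^[k] ⁻¹' C ∩ ⋂ j : ℕ, ⋂ _ : j < k, (f^[j] ⁻¹' C)ᶜ) := by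
    ext x; simp [entranceDvd, and_left_comm]
  rw [this]
  exact .iUnion fun k => .iUnion fun _ => ((hf.iterate k) hC).inter
    (.iInter fun j => .iInter fun _ => ((hf.iterate j) hC).compl)

theorem measurableSet_periodicMarkers [MeasurableSpace X] (hf : Measurable f)
    (hC : MeasurableSet C) (L : ℕ) : MeasurableSet (periodicMarkers f C L) :=
  (measurableSet_entranceDvd hf hC L 0).inter (hf (measurableSet_entranceDvd hf hC L 1))

theorem exists_first_return {x : X} (hx : ∃ᶠ n in atTop, f^[n] x ∈ C) :
    ∃ a, 0 < a ∧ f^[a] x ∈ C ∧ ∀ j, 0 < j → j < a → f^[j] x ∉ C := by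
  classical
  obtain ⟨n, hn, hnC⟩ := frequently_atTop.1 hx 1
  have hex : ∃ a, 0 < a ∧ f^[a] x ∈ C := ⟨n, hn, hnC⟩
  exact ⟨Nat.find hex, (Nat.find_spec hex).1, (Nat.find_spec hex).2,
    fun j hj0 hj hjC => Nat.find_min hex hj ⟨hj0, hjC⟩⟩

theorem exists_lt_iterate_mem_periodicMarkers (hL : 0 < L) {x : X} {a : ℕ} (ha : L ≤ a)
    (hxa : f^[a] x ∈ C) (hj : ∀ j, 0 < j → j < a → f^[j] x ∉ C) :
    ∃ i < L, f^[i] x ∈ periodicMarkers f C L := by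
  have hdiv := Nat.div_add_mod a L
  have hq : L * 1 ≤ L * (a / L) := Nat.mul_le_mul_left _ ((Nat.one_le_div_iff hL).2 ha)
  refine ⟨a % L, Nat.mod_lt a hL, ?_, L * (a / L) - 1, ?_, ?_, fun j hjl => ?_⟩
  · by_cases hx0 : a % L = 0 ∧ x ∈ C
    · rw [hx0.1]
      exact ⟨0, by simp, hx0.2, by simp⟩
    · refine ⟨L * (a / L), by simp, ?_, fun j hjl => ?_⟩
      · rwa [← Function.iterate_add_apply, hdiv]
      · rw [← Function.iterate_add_apply]
        rcases Nat.eq_zero_or_pos (j + a % L) with h0 | h0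
        · rw [h0]; exact fun h => hx0 ⟨by omega, h⟩
        · exact hj _ h0 (by omega)
  · rw [Nat.sub_add_cancel (by omega)]
    exact dvd_mul_right L _
  · rwa [← Function.iterate_succ_apply, ← Function.iterate_add_apply,
      show (L * (a / L) - 1).succ + a % L = a by omega]
  · rw [← Function.iterate_succ_apply, ← Function.iterate_add_apply]
    exact hj _ (by omega) (by omega)

theorem Separated.exists_lt_iterate_mem_periodicMarkers (hL : 0 < L) (hsep : Separated f C L)
    {x : X} (hx : ∃ᶠ n in atTop, f^[n] x ∈ C) :
    ∃ i < 2 * L, f^[i] x ∈ periodicMarkers f C L := by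
  obtain ⟨a, -, haC, haj⟩ := exists_first_return hx
  rcases le_or_gt L a with hLa | hLa
  · obtain ⟨i, hi, hiM⟩ := HSY.exists_lt_iterate_mem_periodicMarkers hL hLa haC haj
    exact ⟨i, by omega, hiM⟩
  · have hx' : ∃ᶠ n in atTop, f^[n] (f^[a] x) ∈ C := by
      rw [← map_add_atTop_eq_nat a, frequently_map] at hx
      simpa only [Function.iterate_add_apply] using hx
    obtain ⟨b, hb0, hbC, hbj⟩ := exists_first_return hx'
    have hLb : L ≤ b := not_lt.1 fun h => hsep _ haC b hb0 h hbC
    obtain ⟨i, hi, hiM⟩ := HSY.exists_lt_iterate_mem_periodicMarkers hL hLb hbC hbj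
    exact ⟨i + a, by omega, by rwa [Function.iterate_add_apply]⟩

theorem separated_periodicMarkers (f : X → X) (C : Set X) (L : ℕ) :
    Separated f (periodicMarkers f C L) L := by
  rintro x ⟨-, k, hk, hkC, hkj⟩ i hi0 hiL ⟨⟨l, hl, hlC, hlj⟩, -⟩
  have hkL := Nat.le_of_dvd (by omega) hk
  have same_entrance : l + i = k + 1 := by
    rw [← Function.iterate_add_apply] at hlC
    rcases lt_trichotomy (l + i) (k + 1) with hlt | heq | hgt
    · refine absurd ?_ (hkj (l + i - 1) (by omega))
      rwa [← Function.iterate_succ_apply, show (l + i - 1).succ = l + i by omega]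
    · exact heq
    · refine absurd ?_ (hlj (k + 1 - i) (by omega))
      rw [← Function.iterate_add_apply, show k + 1 - i + i = k.succ by omega]
      exact hkC
  have hLi : L ∣ i := (Nat.dvd_add_right (by simpa using hl)).1 (same_entrance ▸ hk)
  exact absurd (Nat.le_of_dvd hi0 hLi) (by omega)

end PeriodicMarkers

section HasMarkers

variable {X : Type*} [MeasurableSpace X] {f : X → X}

theorem measurableSet_setOf_frequently_iterate_mem (hf : Measurable f) {C : Set X}
    (hC : MeasurableSet C) : MeasurableSet {x | ∃ᶠ n in atTop, f^[n] x ∈ C} := by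
  have : {x | ∃ᶠ n in atTop, f^[n] x ∈ C} = limsup (fun n => f^[n] ⁻¹' C) atTop := by
    ext x; simp [mem_limsup_iff_frequently_mem]
  exact this ▸ .measurableSet_limsup fun n => (hf.iterate n) hC

omit [MeasurableSpace X] in
theorem preimage_setOf_frequently_iterate_mem (f : X → X) (C : Set X) :
    f ⁻¹' {x | ∃ᶠ n in atTop, f^[n] x ∈ C} = {x | ∃ᶠ n in atTop, f^[n] x ∈ C} := by
  ext x
  simp only [Set.mem_preimage, Set.mem_ofPred_eq, ← Function.iterate_succ_apply]
  conv_rhs => rw [← map_add_atTop_eq_nat 1, frequently_map]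

theorem measure_setOf_frequently_iterate_mem {μ : Measure X} [IsProbabilityMeasure μ]
    (hf : Ergodic f μ) {C : Set X} (hC : MeasurableSet C) (hC0 : 0 < μ C) :
    μ {x | ∃ᶠ n in atTop, f^[n] x ∈ C} = 1 := by
  refine (hf.prob_eq_zero_or_one (measurableSet_setOf_frequently_iterate_mem hf.measurable hC)
    (preimage_setOf_frequently_iterate_mem f C)).resolve_left fun h0 => hC0.ne' ?_
  refine measure_eq_zero_iff_ae_notMem.2 ?_
  filter_upwards [hf.toMeasurePreserving.conservative.ae_mem_imp_frequently_image_mem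
    hC.nullMeasurableSet, measure_eq_zero_iff_ae_notMem.1 h0] with x hx hx' hxC using hx' (hx hxC)

theorem exists_invariant_set_with_markers [StandardBorelSpace X] {μ : Measure X}
    [IsProbabilityMeasure μ] [NullSingletonClass μ] (hf : Ergodic f μ) :
    ∃ R, MeasurableSet R ∧ f ⁻¹' R = R ∧ μ R = 1 ∧ ∀ L, 0 < L → ∃ M, MeasurableSet M ∧
      (∀ x ∈ R, ∃ i < 2 * L, f^[i] x ∈ M) ∧ Separated f M L := by
  choose C hC hC0 hsep using fun L : ℕ => exists_separated_set hf L.succ_pos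
  have hV (L : ℕ) : MeasurableSet {x | ∃ᶠ n in atTop, f^[n] x ∈ C L} :=
    measurableSet_setOf_frequently_iterate_mem hf.measurable (hC L)
  refine ⟨⋂ L, {x | ∃ᶠ n in atTop, f^[n] x ∈ C L}, .iInter hV, ?_, ?_, fun L hL => ?_⟩
  · simp only [Set.preimage_iInter, preimage_setOf_frequently_iterate_mem]
  · rw [← prob_compl_eq_zero_iff (.iInter hV), Set.compl_iInter, measure_iUnion_null_iff]
    exact fun L => (prob_compl_eq_zero_iff (hV L)).2
      (measure_setOf_frequently_iterate_mem hf (hC L) (hC0 L))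
  · obtain ⟨n, rfl⟩ := Nat.exists_eq_succ_of_ne_zero hL.ne'
    exact ⟨periodicMarkers f (C n) (n + 1), measurableSet_periodicMarkers hf.measurable (hC n) _,
      fun x hx => (hsep n).exists_lt_iterate_mem_periodicMarkers hL (Set.mem_iInter.1 hx n),
      separated_periodicMarkers f (C n) _⟩

/-- The last points of `B` before a visit to the marker set `M`, among those where this visit takes
place in fewer than `H` steps. -/
def lastVisitBefore {X : Type*} (f : X → X) (B M : Set X) (H : ℕ) : Set X :=
  {x | x ∈ B ∧ ∃ j < H, f^[j] x ∈ M ∧ ∀ i, 0 < i → i ≤ j → f^[i] x ∉ B}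

theorem measurableSet_lastVisitBefore (hf : Measurable f) {B M : Set X} (hB : MeasurableSet B)
    (hM : MeasurableSet M) (H : ℕ) : MeasurableSet (lastVisitBefore f B M H) := by
  have : lastVisitBefore f B M H = B ∩ ⋃ j : ℕ, ⋃ _ : j < H, (f^[j] ⁻¹' M ∩
      ⋂ i : ℕ, ⋂ _ : 0 < i, ⋂ _ : i ≤ j, (f^[i] ⁻¹' B)ᶜ) := by
    ext x; simp [lastVisitBefore, and_left_comm]
  rw [this]
  exact hB.inter (.iUnion fun j => .iUnion fun _ => ((hf.iterate j) hM).inter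
    (.iInter fun i => .iInter fun _ => .iInter fun _ => ((hf.iterate i) hB).compl))

omit [MeasurableSpace X] in
theorem GapBound.lastVisitBefore {B M : Set X} {H K : ℕ} (hB : GapBound f B H)
    (hM : GapBound f M K) : GapBound f (lastVisitBefore f B M H) (H + K) := by
  classical
  intro x
  obtain ⟨i, hi, hiB⟩ := hB x
  obtain ⟨k, hk, hkM⟩ := hM (f^[i] x)
  rw [← Function.iterate_add_apply] at hkM
  set t := Nat.findGreatest (fun t => f^[t] x ∈ B) (k + i)
  have htB : f^[t] x ∈ B :=
    Nat.findGreatest_spec (P := fun t => f^[t] x ∈ B) (Nat.le_add_left i k) hiB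
  have htle : t ≤ k + i := Nat.findGreatest_le _
  have htgt (s : ℕ) (hts : t < s) (hs : s ≤ k + i) : f^[s] x ∉ B :=
    Nat.findGreatest_is_greatest hts hs
  refine ⟨t, by omega, htB, k + i - t, ?_, ?_, fun s hs0 hs => ?_⟩
  · by_contra! h
    obtain ⟨s, hs, hsB⟩ := hB (f^[t + 1] x)
    rw [← Function.iterate_add_apply] at hsB
    exact htgt _ (by omega) (by omega) hsB
  · rwa [← Function.iterate_add_apply, Nat.sub_add_cancel htle]
  · rw [← Function.iterate_add_apply]
    exact htgt _ (by omega) (by omega)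

omit [MeasurableSpace X] in
theorem Separated.lastVisitBefore {B M : Set X} {n H : ℕ} (hM : Separated f M (n + H)) :
    Separated f (lastVisitBefore f B M H) n := by
  rintro x ⟨-, j, -, hjM, hjB⟩ i hi0 hin ⟨hyB, j', hj', hjM', -⟩
  rw [← Function.iterate_add_apply] at hjM'
  have hji : j < i := not_le.1 fun h => hjB i hi0 h hyB
  refine hM _ hjM (j' + i - j) (by omega) (by omega) ?_
  rwa [← Function.iterate_add_apply, Nat.sub_add_cancel (by omega)]

theorem HasMarkers.exists_subset (hMK : HasMarkers f) (hf : Measurable f) {B : Set X}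
    (hB : MeasurableSet B) {H : ℕ} (hgap : GapBound f B H) (n : ℕ) :
    ∃ B' ⊆ B, MeasurableSet B' ∧ (∃ H', GapBound f B' H') ∧ Separated f B' n := by
  rcases isEmpty_or_nonempty X with _ | ⟨⟨x₀⟩⟩
  · exact ⟨B, subset_rfl, hB, ⟨H, hgap⟩, fun x => isEmptyElim x⟩
  obtain ⟨i, hi, -⟩ := hgap x₀
  obtain ⟨M, hM, hMg, hMs⟩ := hMK (n + H) (by omega)
  exact ⟨lastVisitBefore f B M H, fun x hx => hx.1, measurableSet_lastVisitBefore hf hB hM H,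
    ⟨_, hgap.lastVisitBefore hMg⟩, hMs.lastVisitBefore⟩

end HasMarkers

/-! ### Columns over a marker set -/

/-- The time of the first return to `B`, or `0` if there is none. -/
noncomputable def returnTime {X : Type*} (f : X → X) (B : Set X) (x : X) : ℕ :=
  sInf {i | 0 < i ∧ f^[i] x ∈ B}

/-- The time since the last visit to `B`, or `0` if there is none. -/
noncomputable def age {X : Type*} [MeasurableSpace X] (T : X ≃ᵐ X) (B : Set X) (x : X) : ℕ :=
  sInf {i | T.symm^[i] x ∈ B}

/-- The last point of `B` visited on the way to `x`, that is the base of the column of `x`. -/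
noncomputable def basePt {X : Type*} [MeasurableSpace X] (T : X ≃ᵐ X) (B : Set X) (x : X) : X :=
  T.symm^[age T B x] x

section ReturnTime

variable {X : Type*} {f : X → X} {B : Set X} {H : ℕ} {x : X}

theorem notMem_of_lt_returnTime {i : ℕ} (h0 : 0 < i) (hi : i < returnTime f B x) : f^[i] x ∉ B :=
  fun hB => Nat.notMem_of_lt_sInf hi ⟨h0, hB⟩

theorem returnTime_eq {k : ℕ} (h0 : 0 < k) (hk : f^[k] x ∈ B)
    (hj : ∀ j, 0 < j → j < k → f^[j] x ∉ B) : returnTime f B x = k :=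
  le_antisymm (Nat.sInf_le ⟨h0, hk⟩) (le_csInf ⟨k, h0, hk⟩ fun j hjB =>
    not_lt.1 fun hlt => hj j hjB.1 hlt hjB.2)

theorem GapBound.returnTime_mem (h : GapBound f B H) (x : X) :
    returnTime f B x ∈ {i | 0 < i ∧ f^[i] x ∈ B} := by
  obtain ⟨i, -, hiB⟩ := h (f x)
  exact Nat.sInf_mem ⟨i + 1, i.succ_pos, hiB⟩

theorem GapBound.returnTime_pos (h : GapBound f B H) (x : X) : 0 < returnTime f B x :=
  (h.returnTime_mem x).1

theorem GapBound.iterate_returnTime_mem (h : GapBound f B H) (x : X) :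
    f^[returnTime f B x] x ∈ B :=
  (h.returnTime_mem x).2

theorem GapBound.returnTime_le (h : GapBound f B H) (x : X) : returnTime f B x ≤ H := by
  obtain ⟨i, hi, hiB⟩ := h (f x)
  have hmem : i + 1 ∈ {i | 0 < i ∧ f^[i] x ∈ B} := ⟨i.succ_pos, hiB⟩
  exact (Nat.sInf_le hmem).trans hi

theorem Separated.le_returnTime (h : GapBound f B H) {n : ℕ} (hs : Separated f B n)
    (hx : x ∈ B) : n ≤ returnTime f B x :=
  not_lt.1 fun hlt => hs x hx _ (h.returnTime_pos x) hlt (h.iterate_returnTime_mem x)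

theorem GapBound.measurable_returnTime [MeasurableSpace X] (h : GapBound f B H) (hf : Measurable f)
    (hB : MeasurableSet B) : Measurable (returnTime f B) := by
  refine measurable_to_countable' fun k => ?_
  rcases Nat.eq_zero_or_pos k with rfl | hk
  · convert MeasurableSet.empty (α := X)
    ext x
    simpa using (h.returnTime_pos x).ne'
  · have : returnTime f B ⁻¹' {k} = f^[k] ⁻¹' B ∩
        ⋂ i : ℕ, ⋂ _ : 0 < i, ⋂ _ : i < k, (f^[i] ⁻¹' B)ᶜ := by
      ext x
      simp only [Set.mem_preimage, Set.mem_singleton_iff, Set.mem_inter_iff, Set.mem_iInter,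
        Set.mem_compl_iff]
      refine ⟨?_, fun hx => returnTime_eq hk hx.1 hx.2⟩
      rintro rfl
      exact ⟨h.iterate_returnTime_mem x, fun i h0 hi => notMem_of_lt_returnTime h0 hi⟩
    rw [this]
    exact ((hf.iterate k) hB).inter (.iInter fun i => .iInter fun _ => .iInter fun _ =>
      ((hf.iterate i) hB).compl)

end ReturnTime

section Columns

variable {X : Type*} [MeasurableSpace X] {T : X ≃ᵐ X} {B : Set X} {H : ℕ} {x y : X} {i : ℕ}

theorem iterate_symm_iterate (T : X ≃ᵐ X) (n : ℕ) (x : X) : T^[n] (T.symm^[n] x) = x :=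
  Function.LeftInverse.iterate T.apply_symm_apply n x

theorem symm_iterate_iterate (T : X ≃ᵐ X) (n : ℕ) (x : X) : T.symm^[n] (T^[n] x) = x :=
  Function.LeftInverse.iterate T.symm_apply_apply n x

theorem iterate_age_basePt (T : X ≃ᵐ X) (B : Set X) (x : X) : T^[age T B x] (basePt T B x) = x :=
  iterate_symm_iterate T _ x

theorem age_le_of_iterate_eq (hy : y ∈ B) (hx : T^[i] y = x) : age T B x ≤ i :=
  Nat.sInf_le (by rw [Set.mem_ofPred_eq, ← hx, symm_iterate_iterate]; exact hy)

theorem age_iterate_of_forall_notMem (hy : y ∈ B) (hj : ∀ j, 0 < j → j ≤ i → T^[j] y ∉ B) :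
    age T B (T^[i] y) = i := by
  refine le_antisymm (age_le_of_iterate_eq hy rfl)
    (le_csInf ⟨i, by rwa [Set.mem_ofPred_eq, symm_iterate_iterate]⟩ fun j hjB => ?_)
  by_contra! hlt
  refine hj (i - j) (by omega) (by omega) ?_
  rwa [Set.mem_ofPred_eq, ← Nat.add_sub_cancel' hlt.le, Function.iterate_add_apply,
    symm_iterate_iterate] at hjB

theorem age_iterate (hy : y ∈ B) (hi : i < returnTime T B y) : age T B (T^[i] y) = i :=
  age_iterate_of_forall_notMem hy fun _ h0 hj => notMem_of_lt_returnTime h0 (hj.trans_lt hi)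

theorem basePt_iterate (hy : y ∈ B) (hi : i < returnTime T B y) : basePt T B (T^[i] y) = y := by
  rw [basePt, age_iterate hy hi, symm_iterate_iterate]

theorem age_of_mem (hx : x ∈ B) : age T B x = 0 :=
  age_iterate_of_forall_notMem (i := 0) hx (by omega)

namespace GapBound

theorem exists_symm_iterate_mem (h : GapBound T B H) (x : X) : ∃ j < H, T.symm^[j] x ∈ B := by
  obtain ⟨i, hi, hiB⟩ := h (T.symm^[H - 1] x)
  refine ⟨H - 1 - i, by omega, ?_⟩
  rwa [show H - 1 = i + (H - 1 - i) by omega, Function.iterate_add_apply, iterate_symm_iterate]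
    at hiB

theorem basePt_mem (h : GapBound T B H) (x : X) : basePt T B x ∈ B := by
  obtain ⟨j, -, hj⟩ := h.exists_symm_iterate_mem x
  exact Nat.sInf_mem (s := {i | T.symm^[i] x ∈ B}) ⟨j, hj⟩

theorem age_lt (h : GapBound T B H) (x : X) : age T B x < H := by
  obtain ⟨j, hjH, hj⟩ := h.exists_symm_iterate_mem x
  exact (Nat.sInf_le hj).trans_lt hjH

theorem age_lt_returnTime (h : GapBound T B H) (x : X) :
    age T B x < returnTime T B (basePt T B x) := by
  by_contra! hle
  have hage := age_le_of_iterate_eq (h.iterate_returnTime_mem (basePt T B x)) (by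
    rw [← Function.iterate_add_apply, Nat.sub_add_cancel hle, iterate_age_basePt])
  have := h.returnTime_pos (basePt T B x)
  omega

theorem age_add_one_lt_returnTime (h : GapBound T B H) (hx : T x ∉ B) :
    age T B x + 1 < returnTime T B (basePt T B x) := by
  refine lt_of_le_of_ne (h.age_lt_returnTime x) fun heq => hx ?_
  have hmem := h.iterate_returnTime_mem (basePt T B x)
  rwa [← heq, Function.iterate_succ_apply', iterate_age_basePt] at hmem

theorem basePt_apply_of_notMem (h : GapBound T B H) (hx : T x ∉ B) :
    basePt T B (T x) = basePt T B x := by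
  have := basePt_iterate (h.basePt_mem x) (h.age_add_one_lt_returnTime hx)
  rwa [Function.iterate_succ_apply', iterate_age_basePt] at this

theorem age_apply_of_notMem (h : GapBound T B H) (hx : T x ∉ B) :
    age T B (T x) = age T B x + 1 := by
  have := age_iterate (h.basePt_mem x) (h.age_add_one_lt_returnTime hx)
  rwa [Function.iterate_succ_apply', iterate_age_basePt] at this

theorem returnTime_basePt_of_apply_mem (h : GapBound T B H) (hx : T x ∈ B) :
    returnTime T B (basePt T B x) = age T B x + 1 := by
  have hlt := h.age_lt_returnTime x
  refine returnTime_eq (Nat.succ_pos _) ?_ fun j h0 hj => notMem_of_lt_returnTime h0 (by omega)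
  rwa [Function.iterate_succ_apply', iterate_age_basePt]

theorem measurable_age (h : GapBound T B H) (hB : MeasurableSet B) : Measurable (age T B) := by
  refine measurable_to_countable' fun k => ?_
  have : age T B ⁻¹' {k} = T.symm^[k] ⁻¹' B ∩ ⋂ i : ℕ, ⋂ _ : i < k, (T.symm^[i] ⁻¹' B)ᶜ := by
    ext x
    simp only [Set.mem_preimage, Set.mem_singleton_iff, Set.mem_inter_iff, Set.mem_iInter,
      Set.mem_compl_iff]
    constructor
    · rintro rfl
      exact ⟨h.basePt_mem x, fun i hi hiB => Nat.notMem_of_lt_sInf hi hiB⟩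
    · rintro ⟨hk, hlt⟩
      exact le_antisymm (Nat.sInf_le hk)
        (le_csInf ⟨k, hk⟩ fun j hj => not_lt.1 fun hjk => hlt j hjk hj)
  rw [this]
  exact ((T.symm.measurable.iterate k) hB).inter (.iInter fun i => .iInter fun _ =>
    ((T.symm.measurable.iterate i) hB).compl)

theorem measurable_basePt (h : GapBound T B H) (hB : MeasurableSet B) :
    Measurable (basePt T B) := by
  have : Measurable fun p : ℕ × X => T.symm^[p.1] p.2 :=
    measurable_from_prod_countable_right fun n => T.symm.measurable.iterate n
  exact this.comp ((h.measurable_age hB).prodMk measurable_id)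

end GapBound

end Columns

section Kac

variable {X : Type*} [MeasurableSpace X] {μ : Measure X} {T : X ≃ᵐ X} {A B : Set X} {H : ℕ}

theorem GapBound.preimage_iterate_basePt_inter_age (h : GapBound T B H) (hAB : A ⊆ B) (i : ℕ) :
    T^[i] ⁻¹' (basePt T B ⁻¹' A ∩ age T B ⁻¹' {i}) = A ∩ {y | i < returnTime T B y} := by
  ext y
  constructor
  · rintro ⟨hbase, hage : age T B (T^[i] y) = i⟩
    have hy : basePt T B (T^[i] y) = y := by rw [basePt, hage, symm_iterate_iterate]
    have hlt := h.age_lt_returnTime (T^[i] y)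
    rw [hage, hy] at hlt
    exact ⟨hy ▸ hbase, hlt⟩
  · rintro ⟨hyA, hi⟩
    refine ⟨?_, age_iterate (hAB hyA) hi⟩
    rwa [Set.mem_preimage, basePt_iterate (hAB hyA) hi]

theorem GapBound.setIntegral_basePt_preimage {E : Type*} [NormedAddCommGroup E] [NormedSpace ℝ E]
    (h : GapBound T B H) (hT : MeasurePreserving T μ μ) (hB : MeasurableSet B)
    (hA : MeasurableSet A) (hAB : A ⊆ B) {J : X → E} (hJ : Integrable J μ) :
    ∫ x in basePt T B ⁻¹' A, J x ∂μ =
      ∫ y in A, ∑ i ∈ Finset.range (returnTime T B y), J (T^[i] y) ∂μ := by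
  set level : ℕ → Set X := fun i => basePt T B ⁻¹' A ∩ age T B ⁻¹' {i}
  have hlevel (i : ℕ) : MeasurableSet (level i) :=
    (h.measurable_basePt hB hA).inter (h.measurable_age hB (measurableSet_singleton i))
  have hcut (i : ℕ) : MeasurableSet {y | i < returnTime T B y} :=
    measurableSet_lt measurable_const (h.measurable_returnTime T.measurable hB)
  have hJi (i : ℕ) : Integrable (fun y => J (T^[i] y)) μ :=
    (hT.iterate i).integrable_comp_of_integrable hJ
  have hunion : basePt T B ⁻¹' A = ⋃ i ∈ Finset.range H, level i := by
    ext x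
    simp [level, h.age_lt x]
  have hdisj : Set.Pairwise (Finset.range H : Set ℕ) (Function.onFun Disjoint level) := by
    refine fun i _ j _ hij => Set.disjoint_left.2 fun x hi hj => hij ?_
    exact hi.2.symm.trans hj.2
  calc ∫ x in basePt T B ⁻¹' A, J x ∂μ = ∑ i ∈ Finset.range H, ∫ x in level i, J x ∂μ := by
        rw [hunion, integral_biUnion_finset _ (fun i _ => hlevel i) hdisj
          fun i _ => hJ.integrableOn]
    _ = ∑ i ∈ Finset.range H, ∫ y in A ∩ {y | i < returnTime T B y}, J (T^[i] y) ∂μ := by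
        refine Finset.sum_congr rfl fun i _ => ?_
        have hmap := (hT.iterate i).map_eq
        rw [← h.preimage_iterate_basePt_inter_age hAB,
          ← setIntegral_map (hlevel i) (hmap.symm ▸ hJ.aestronglyMeasurable)
            (hT.iterate i).measurable.aemeasurable, hmap]
    _ = ∫ y in A, ∑ i ∈ Finset.range H,
          {y | i < returnTime T B y}.indicator (fun y => J (T^[i] y)) y ∂μ := by
        rw [integral_finsetSum _ fun i _ => ((hJi i).indicator (hcut i)).integrableOn]
        exact Finset.sum_congr rfl fun i _ => (setIntegral_indicator (hcut i)).symm
    _ = ∫ y in A, ∑ i ∈ Finset.range (returnTime T B y), J (T^[i] y) ∂μ := by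
        congr 1 with y
        simp only [Set.indicator_apply, Set.mem_ofPred_eq]
        rw [← Finset.sum_filter]
        congr 1
        ext i
        have := h.returnTime_le y
        simp only [Finset.mem_filter, Finset.mem_range]
        omega

end Kac

section BadColumns

theorem abs_sum_average_sub_le {u : ℕ → ℝ} (h0 : ∀ i, 0 ≤ u i) (h1 : ∀ i, u i ≤ 1) {n : ℕ}
    (hn : 0 < n) (r : ℕ) :
    |∑ i ∈ Finset.range r, (n : ℝ)⁻¹ * ∑ k ∈ Finset.range n, u (k + i) -
      ∑ i ∈ Finset.range r, u i| ≤ n := by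
  have sum_nonneg (j k : ℕ) : 0 ≤ ∑ i ∈ Finset.range k, u (j + i) :=
    Finset.sum_nonneg fun i _ => h0 _
  have sum_le (j k : ℕ) : ∑ i ∈ Finset.range k, u (j + i) ≤ k :=
    (Finset.sum_le_sum fun i _ => h1 (j + i)).trans (by simp)
  have abs_shift_sub_le (k : ℕ) (hk : k ∈ Finset.range n) :
      |∑ i ∈ Finset.range r, u (k + i) - ∑ i ∈ Finset.range r, u i| ≤ n := by
    have hkn : (k : ℝ) ≤ n := by exact_mod_cast (Finset.mem_range.1 hk).le
    have hsplit := (Finset.sum_range_add u k r).symm.trans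
      (add_comm k r ▸ Finset.sum_range_add u r k)
    have hle := sum_le 0 k
    have hnonneg := sum_nonneg 0 k
    simp only [zero_add] at hle hnonneg
    rw [abs_le]
    constructor <;> linarith [sum_le r k, sum_nonneg r k]
  have hdiff : ∑ i ∈ Finset.range r, (n : ℝ)⁻¹ * ∑ k ∈ Finset.range n, u (k + i) -
      ∑ i ∈ Finset.range r, u i = (n : ℝ)⁻¹ * ∑ k ∈ Finset.range n,
        (∑ i ∈ Finset.range r, u (k + i) - ∑ i ∈ Finset.range r, u i) := by
    rw [← Finset.mul_sum, Finset.sum_comm, Finset.sum_sub_distrib, mul_sub]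
    congr 1
    simp only [Finset.sum_const, Finset.card_range, nsmul_eq_mul]
    field_simp
  rw [hdiff, abs_mul, abs_inv, Nat.abs_cast, inv_mul_le_iff₀ (by exact_mod_cast hn)]
  refine (Finset.abs_sum_le_sum_abs _ _).trans ((Finset.sum_le_sum abs_shift_sub_le).trans ?_)
  simp

/-- The points of `B` over which some test function `g j` has a column average deviating from its
mean by more than `δ`. -/
def badBase {X : Type*} [MeasurableSpace X] (μ : Measure X) (T : X → X) (B : Set X)
    {ι : Type*} (g : ι → X → ℝ) (δ : ℝ) : Set X :=
  {b | b ∈ B ∧ ∃ j, δ * returnTime T B b <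
    |∑ i ∈ Finset.range (returnTime T B b), (g j (T^[i] b) - ∫ x, g j x ∂μ)|}

variable {X : Type*} [MeasurableSpace X] {μ : Measure X} {ι : Type*} {g : ι → X → ℝ} {B : Set X}

theorem measurableSet_badBase {f : X → X} (hf : Measurable f) {H : ℕ} (h : GapBound f B H)
    (hB : MeasurableSet B) [Countable ι] (hg : ∀ j, Measurable (g j)) (δ : ℝ) :
    MeasurableSet (badBase μ f B g δ) := by
  have hr := h.measurable_returnTime hf hB
  have : badBase μ f B g δ = B ∩ ⋃ j, {b | δ * returnTime f B b <
      |∑ i ∈ Finset.range (returnTime f B b), (g j (f^[i] b) - ∫ x, g j x ∂μ)|} := by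
    ext x; simp [badBase]
  rw [this]
  refine hB.inter (.iUnion fun j => measurableSet_lt ?_ ?_)
  · exact (measurable_from_top.comp hr).const_mul δ
  · have : Measurable fun p : ℕ × X =>
        ∑ i ∈ Finset.range p.1, (g j (f^[i] p.2) - ∫ x, g j x ∂μ) :=
      measurable_from_prod_countable_right fun n => by
        refine Finset.measurable_sum (Finset.range n) fun i _ => ?_
        exact ((hg j).comp (hf.iterate i)).sub_const _
    exact continuous_abs.measurable.comp (this.comp (hr.prodMk measurable_id))

theorem integrable_abs_birkhoffAverage_sub [IsFiniteMeasure μ] {f : X → X}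
    (hf : MeasurePreserving f μ μ) {u : X → ℝ} (hu : Integrable u μ) (n : ℕ) (c : ℝ) :
    Integrable (fun x => |birkhoffAverage ℝ f u n x - c|) μ :=
  ((integrable_birkhoffAverage hf hu n).sub (integrable_const c)).abs

theorem exists_integral_sum_abs_birkhoffAverage_sub_lt [Fintype ι] [IsProbabilityMeasure μ]
    {f : X → X} (hf : Ergodic f μ) (hg : ∀ j, MemLp (g j) 2 μ) {κ : ℝ} (hκ : 0 < κ) :
    ∃ n, 0 < n ∧ ∫ x, ∑ j, |birkhoffAverage ℝ f (g j) n x - ∫ y, g j y ∂μ| ∂μ < κ := by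
  have hlim : Tendsto (fun n => ∑ j, ∫ x, |birkhoffAverage ℝ f (g j) n x - ∫ y, g j y ∂μ| ∂μ)
      atTop (𝓝 0) := by
    simpa only [Finset.sum_const_zero] using
      tendsto_finsetSum (Finset.univ : Finset ι) fun j _ =>
        tendsto_integral_abs_birkhoffAverage_sub hf (hg j)
  obtain ⟨n, hn0, hn⟩ := ((eventually_gt_atTop 0).and (hlim.eventually_lt_const hκ)).exists
  refine ⟨n, hn0, ?_⟩
  rwa [integral_finsetSum _ fun j _ => integrable_abs_birkhoffAverage_sub hf.toMeasurePreserving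
    ((hg j).integrable one_le_two) n _]

theorem mul_returnTime_le_sum_of_mem_badBase [Fintype ι] {f : X → X}
    (hg0 : ∀ j x, 0 ≤ g j x) (hg1 : ∀ j x, g j x ≤ 1) {δ : ℝ} {y : X}
    (hy : y ∈ badBase μ f B g δ) {n : ℕ} (hn : 0 < n) (hr : n ≤ δ / 2 * returnTime f B y) :
    δ / 2 * returnTime f B y ≤ ∑ i ∈ Finset.range (returnTime f B y),
      ∑ j, |birkhoffAverage ℝ f (g j) n (f^[i] y) - ∫ x, g j x ∂μ| := by
  obtain ⟨-, j, hj⟩ := hy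
  set r := returnTime f B y
  set c := ∫ x, g j x ∂μ
  have average_eq (i : ℕ) : (n : ℝ)⁻¹ * ∑ k ∈ Finset.range n, g j (f^[k + i] y) =
      birkhoffAverage ℝ f (g j) n (f^[i] y) := by
    simp [birkhoffAverage, birkhoffSum, Function.iterate_add_apply]
  have hsmooth := abs_sum_average_sub_le (u := fun i => g j (f^[i] y)) (fun _ => hg0 _ _)
    (fun _ => hg1 _ _) hn r
  simp only [average_eq] at hsmooth
  have htriangle : |∑ i ∈ Finset.range r, (g j (f^[i] y) - c)| ≤
      |∑ i ∈ Finset.range r, (birkhoffAverage ℝ f (g j) n (f^[i] y) - c)| +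
      |∑ i ∈ Finset.range r, birkhoffAverage ℝ f (g j) n (f^[i] y) -
        ∑ i ∈ Finset.range r, g j (f^[i] y)| := by
    refine le_of_eq_of_le (congrArg _ ?_) (abs_sub _ _)
    simp only [Finset.sum_sub_distrib]
    ring
  calc δ / 2 * r ≤ |∑ i ∈ Finset.range r, (birkhoffAverage ℝ f (g j) n (f^[i] y) - c)| := by
        linarith
    _ ≤ ∑ i ∈ Finset.range r, |birkhoffAverage ℝ f (g j) n (f^[i] y) - c| :=
        Finset.abs_sum_le_sum_abs _ _
    _ ≤ _ := Finset.sum_le_sum fun i _ => Finset.single_le_sum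
        (f := fun j => |birkhoffAverage ℝ f (g j) n (f^[i] y) - ∫ x, g j x ∂μ|)
        (fun j _ => abs_nonneg _) (Finset.mem_univ j)

theorem exists_forall_measure_badBase_lt [Finite ι] [IsProbabilityMeasure μ] {T : X ≃ᵐ X}
    (hT : Ergodic T μ) (hg : ∀ j, Measurable (g j)) (hg0 : ∀ j x, 0 ≤ g j x)
    (hg1 : ∀ j x, g j x ≤ 1) {δ η : ℝ} (hδ : 0 < δ) (hη : 0 < η) :
    ∃ n₀ : ℕ, ∀ (B : Set X) (H : ℕ), MeasurableSet B → GapBound T B H → Separated T B n₀ →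
      μ.real (basePt T B ⁻¹' badBase μ T B g δ) < η := by
  cases nonempty_fintype ι
  have hgL (j : ι) : MemLp (g j) 2 μ :=
    .of_bound (hg j).aestronglyMeasurable 1 (.of_forall fun x => by
      rw [Real.norm_of_nonneg (hg0 j x)]; exact hg1 j x)
  obtain ⟨n, hn, hlt⟩ :=
    exists_integral_sum_abs_birkhoffAverage_sub_lt hT hgL (mul_pos (half_pos hδ) hη)
  set G : X → ℝ := fun x => ∑ j, |birkhoffAverage ℝ T (g j) n x - ∫ y, g j y ∂μ|
  have hG : Integrable G μ := integrable_finsetSum _ fun j _ =>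
    integrable_abs_birkhoffAverage_sub hT.toMeasurePreserving ((hgL j).integrable one_le_two) n _
  obtain ⟨n₀, hn₀⟩ := exists_nat_ge (2 * n / δ)
  refine ⟨n₀, fun B H hB hgap hsep => ?_⟩
  set A := badBase μ T B g δ
  have hA : MeasurableSet A := measurableSet_badBase T.measurable hgap hB hg δ
  have hAB : A ⊆ B := fun x hx => hx.1
  have length_le (y : X) (hy : y ∈ A) : n ≤ δ / 2 * returnTime T B y := by
    have hr : (n₀ : ℝ) ≤ returnTime T B y := by exact_mod_cast hsep.le_returnTime hgap (hAB hy)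
    have := (div_le_iff₀ hδ).1 (hn₀.trans hr)
    linarith
  have hcolumns : 0 ≤ ∫ x in basePt T B ⁻¹' A, (G x - δ / 2) ∂μ := by
    rw [hgap.setIntegral_basePt_preimage hT.toMeasurePreserving hB hA hAB
      (J := fun x => G x - δ / 2) (hG.sub (integrable_const _))]
    refine setIntegral_nonneg hA fun y hy => ?_
    have := mul_returnTime_le_sum_of_mem_badBase hg0 hg1 hy hn (length_le y hy)
    simp only [Finset.sum_sub_distrib, Finset.sum_const, Finset.card_range, nsmul_eq_mul]
    linarith
  rw [integral_sub hG.integrableOn (integrable_const _).integrableOn, setIntegral_const,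
    smul_eq_mul] at hcolumns
  have hGA : ∫ x in basePt T B ⁻¹' A, G x ∂μ ≤ ∫ x, G x ∂μ :=
    setIntegral_le_integral hG (.of_forall fun x => Finset.sum_nonneg fun j _ => abs_nonneg _)
  refine lt_of_mul_lt_mul_left (a := δ / 2) ?_ (half_pos hδ).le
  linarith

end BadColumns

/-! ### Pseudo-orbits and replacement of columns -/

/-- A sequence which follows `f`, except that it may jump within `B` each time it enters `B`. -/
def IsPseudoOrbit {X : Type*} (f : X → X) (B : Set X) (z : ℕ → X) : Prop :=
  ∀ n, z (n + 1) = f (z n) ∨ (f (z n) ∈ B ∧ z (n + 1) ∈ B)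

/-- The first `r` terms of `ζ` form a pseudo-orbit which starts in `B` and is about to return
to `B`. -/
structure IsWord {X : Type*} (f : X → X) (B : Set X) (r : ℕ) (ζ : ℕ → X) : Prop where
  pos : 0 < r
  zero_mem : ζ 0 ∈ B
  step : ∀ i, i + 1 < r → ζ (i + 1) = f (ζ i) ∨ (f (ζ i) ∈ B ∧ ζ (i + 1) ∈ B)
  last : f (ζ (r - 1)) ∈ B

/-- The existence of a word of length `r` along which all the test functions `u j` have sums
bounded by `e`. -/
def GoodWord {X : Type*} (f : X → X) (B : Set X) {ι : Type*} (u : ι → X → ℝ) (r : ℕ) (e : ℝ) :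
    Prop :=
  ∃ ζ, IsWord f B r ζ ∧ ∀ j, |∑ i ∈ Finset.range r, u j (ζ i)| ≤ e

/-- The concatenation of the first `r` terms of `ζ` with `ξ`. -/
def concat {X : Type*} (r : ℕ) (ζ ξ : ℕ → X) (i : ℕ) : X :=
  if i < r then ζ i else ξ (i - r)

theorem abs_sum_le_of_abs_le_one {u : ℕ → ℝ} (hu : ∀ i, |u i| ≤ 1) (n : ℕ) :
    |∑ i ∈ Finset.range n, u i| ≤ n :=
  (Finset.abs_sum_le_sum_abs _ _).trans ((Finset.sum_le_sum fun i _ => hu i).trans (by simp))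

section PseudoOrbits

variable {X : Type*} {f : X → X} {B : Set X}

theorem isPseudoOrbit_iterate (f : X → X) (B : Set X) (x : X) :
    IsPseudoOrbit f B fun n => f^[n] x :=
  fun n => .inl (Function.iterate_succ_apply' f n x)

theorem IsPseudoOrbit.apply_add_of_forall_notMem {z : ℕ → X} (hz : IsPseudoOrbit f B z) (t : ℕ) :
    ∀ i, (∀ l < i, f^[l + 1] (z t) ∉ B) → z (t + i) = f^[i] (z t)
  | 0, _ => rfl
  | i + 1, hi => by
    have ih := hz.apply_add_of_forall_notMem t i fun l hl => hi l (by omega)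
    rcases hz (t + i) with hstep | ⟨hmem, -⟩
    · rw [Function.iterate_succ_apply', ← ih, ← hstep, add_assoc]
    · exact absurd (by rwa [Function.iterate_succ_apply', ← ih]) (hi i (by omega))

theorem IsPseudoOrbit.apply_add {z : ℕ → X} (hz : IsPseudoOrbit f B z) {t i : ℕ}
    (hi : i < returnTime f B (z t)) : z (t + i) = f^[i] (z t) :=
  hz.apply_add_of_forall_notMem t i fun l hl => notMem_of_lt_returnTime l.succ_pos (by omega)

theorem IsPseudoOrbit.apply_add_returnTime_mem {H : ℕ} (h : GapBound f B H) {z : ℕ → X}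
    (hz : IsPseudoOrbit f B z) (t : ℕ) : z (t + returnTime f B (z t)) ∈ B := by
  obtain ⟨k, hk⟩ := Nat.exists_eq_add_one.2 (h.returnTime_pos (z t))
  rw [hk, ← add_assoc]
  rcases hz (t + k) with hstep | ⟨-, hmem⟩
  · rw [hstep, hz.apply_add (by omega), ← Function.iterate_succ_apply' f, Nat.succ_eq_add_one,
      ← hk]
    exact h.iterate_returnTime_mem (z t)
  · exact hmem

theorem isWord_iterate {r : ℕ} (hr : 0 < r) {y : X} (hy : y ∈ B) (hy' : f^[r] y ∈ B) :
    IsWord f B r fun i => f^[i] y where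
  pos := hr
  zero_mem := hy
  step i _ := .inl (Function.iterate_succ_apply' f i y)
  last := by rwa [← Function.iterate_succ_apply' f, Nat.succ_eq_add_one, Nat.sub_add_cancel hr]

variable {r s : ℕ} {ζ ξ : ℕ → X}

theorem concat_of_lt {i : ℕ} (hi : i < r) : concat r ζ ξ i = ζ i :=
  if_pos hi

theorem concat_add (i : ℕ) : concat r ζ ξ (r + i) = ξ i := by
  simp [concat]

theorem IsWord.concat (hζ : IsWord f B r ζ) (hξ : IsWord f B s ξ) :
    IsWord f B (r + s) (concat r ζ ξ) where
  pos := Nat.add_pos_left hζ.pos s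
  zero_mem := by rw [concat_of_lt hζ.pos]; exact hζ.zero_mem
  step i hi := by
    rcases lt_trichotomy (i + 1) r with hlt | rfl | hgt
    · rw [concat_of_lt hlt, concat_of_lt (by omega)]
      exact hζ.step i hlt
    · have hjump : concat (i + 1) ζ ξ (i + 1) = ξ 0 := concat_add 0
      rw [hjump, concat_of_lt i.lt_succ_self]
      exact .inr ⟨hζ.last, hξ.zero_mem⟩
    · obtain ⟨k, rfl⟩ := Nat.exists_eq_add_of_le (Nat.lt_succ_iff.1 hgt)
      rw [add_assoc, concat_add, concat_add]
      exact hξ.step k (by omega)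
  last := by
    rw [Nat.add_sub_assoc hξ.pos, concat_add]
    exact hξ.last

end PseudoOrbits

section GoodWords

variable {X : Type*} {f : X → X} {B : Set X} {ι : Type*} {u : ι → X → ℝ} {r s : ℕ} {d e : ℝ}

theorem goodWord_of_iterate_mem (hu : ∀ j x, |u j x| ≤ 1) (hr : 0 < r) {y : X} (hy : y ∈ B)
    (hy' : f^[r] y ∈ B) : GoodWord f B u r r :=
  ⟨_, isWord_iterate hr hy hy', fun j => abs_sum_le_of_abs_le_one (fun _ => hu j _) r⟩

theorem GoodWord.add (h : GoodWord f B u r e) (h' : GoodWord f B u s d) :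
    GoodWord f B u (r + s) (e + d) := by
  obtain ⟨ζ, hζ, hζe⟩ := h
  obtain ⟨ξ, hξ, hξd⟩ := h'
  refine ⟨concat r ζ ξ, hζ.concat hξ, fun j => ?_⟩
  have hfirst : ∑ i ∈ Finset.range r, u j (concat r ζ ξ i) = ∑ i ∈ Finset.range r, u j (ζ i) :=
    Finset.sum_congr rfl fun i hi => by rw [concat_of_lt (Finset.mem_range.1 hi)]
  simp only [Finset.sum_range_add, hfirst, concat_add]
  exact (abs_add_le _ _).trans (add_le_add (hζe j) (hξd j))

theorem GoodWord.mul_add (h : GoodWord f B u s d) (h' : GoodWord f B u r e) (a : ℕ) :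
    GoodWord f B u (a * s + r) (a * d + e) := by
  induction a with
  | zero => simpa using h'
  | succ a ih =>
    convert h.add ih using 1
    · ring
    · push_cast; ring

theorem exists_forall_exists_le_mod_eq (P : ℕ → Prop) (hs : 0 < s) :
    ∃ K, ∀ r, P r → ∃ ρ ≤ K, P ρ ∧ ρ % s = r % s := by
  have exists_bound (c : ℕ) : ∃ k, ∀ r, P r → r % s = c → ∃ ρ ≤ k, P ρ ∧ ρ % s = c := by
    by_cases hc : ∃ ρ, P ρ ∧ ρ % s = c
    · obtain ⟨ρ, hρ⟩ := hc
      exact ⟨ρ, fun _ _ _ => ⟨ρ, le_rfl, hρ⟩⟩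
    · exact ⟨0, fun r hr hrc => absurd ⟨r, hr, hrc⟩ hc⟩
  choose k hk using exists_bound
  refine ⟨(Finset.range s).sup k, fun r hr => ?_⟩
  obtain ⟨ρ, hρk, hρ⟩ := hk (r % s) r hr rfl
  exact ⟨ρ, hρk.trans (Finset.le_sup (f := k) (Finset.mem_range.2 (Nat.mod_lt r hs))), hρ⟩

/-- A long word is filled with copies of the good word of length `s`, apart from a single orbit
segment of bounded length which adjusts its length modulo `s`. -/
theorem GoodWord.exists_forall_goodWord (hu : ∀ j x, |u j x| ≤ 1) {ε : ℝ} (hε : 0 < ε)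
    (hs : GoodWord f B u s (ε / 2 * s)) :
    ∃ R : ℕ, ∀ r, R ≤ r → (∃ y ∈ B, f^[r] y ∈ B) → GoodWord f B u r (ε * r) := by
  have hs0 : 0 < s := hs.elim fun _ hζ => hζ.1.pos
  obtain ⟨K, hK⟩ := exists_forall_exists_le_mod_eq (fun r => 0 < r ∧ ∃ y ∈ B, f^[r] y ∈ B) hs0
  obtain ⟨R, hR⟩ := exists_nat_ge (K / (ε / 2))
  rw [div_le_iff₀ (half_pos hε)] at hR
  refine ⟨max R (K + 1), fun r hr hy => ?_⟩
  obtain ⟨ρ, hρK, ⟨hρ0, y, hyB, hyρ⟩, hmod⟩ := hK r ⟨by omega, hy⟩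
  obtain ⟨a, ha⟩ : s ∣ r - ρ := (Nat.modEq_iff_dvd' (by omega)).1 hmod
  have hlength : r = a * s + ρ := by rw [mul_comm] at ha; omega
  obtain ⟨ζ, hζ, hsum⟩ := hs.mul_add (goodWord_of_iterate_mem hu hρ0 hyB hyρ) a
  rw [← hlength] at hζ hsum
  refine ⟨ζ, hζ, fun j => (hsum j).trans ?_⟩
  calc a * (ε / 2 * s) + ρ ≤ a * (ε / 2 * s) + K := by gcongr
    _ ≤ a * (ε / 2 * s) + R * (ε / 2) := by gcongr
    _ = ε / 2 * (a * s : ℕ) + ε / 2 * R := by push_cast; ring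
    _ ≤ ε / 2 * r + ε / 2 * r := by gcongr <;> omega
    _ = ε * r := by ring

end GoodWords

section Blocks

theorem abs_sum_le_of_blocks {w : ℕ → ℝ} (hw : ∀ n, |w n| ≤ 1) {P : ℕ → Prop} {H : ℕ} {ε : ℝ}
    (hε : 0 ≤ ε) (h : ∀ t, P t → ∃ r, 0 < r ∧ r ≤ H ∧ P (t + r) ∧
      |∑ i ∈ Finset.range r, w (t + i)| ≤ ε * r) (N : ℕ) :
    ∀ t, P t → |∑ n ∈ Finset.range N, w (t + n)| ≤ ε * N + H := by
  induction N using Nat.strong_induction_on with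
  | _ N ih =>
    intro t ht
    obtain ⟨r, hr0, hrH, hPr, hblock⟩ := h t ht
    rcases lt_or_ge N r with hN | hN
    · calc |∑ n ∈ Finset.range N, w (t + n)| ≤ N := abs_sum_le_of_abs_le_one (fun i => hw (t + i)) N
        _ ≤ H := by exact_mod_cast hN.le.trans hrH
        _ ≤ ε * N + H := le_add_of_nonneg_left (by positivity)
    · obtain ⟨m, rfl⟩ := Nat.exists_eq_add_of_le hN
      have hrest := ih m (by omega) (t + r) hPr
      simp only [add_assoc] at hrest
      rw [Finset.sum_range_add]
      refine (abs_add_le _ _).trans ((add_le_add hblock hrest).trans (le_of_eq ?_))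
      push_cast; ring

theorem IsPseudoOrbit.abs_sum_le_of_columns {X : Type*} {f : X → X} {B : Set X} {H : ℕ}
    (h : GapBound f B H) {z : ℕ → X} (hz : IsPseudoOrbit f B z) {v : X → ℝ} (hv : ∀ x, |v x| ≤ 1)
    {ε : ℝ} (hε : 0 ≤ ε) (hcolumn : ∀ y ∈ B,
      |∑ i ∈ Finset.range (returnTime f B y), v (f^[i] y)| ≤ ε * returnTime f B y) (N : ℕ) :
    |∑ n ∈ Finset.range N, v (z n)| ≤ ε * N + 2 * H := by
  have sum_column (t : ℕ) : ∑ i ∈ Finset.range (returnTime f B (z t)), v (z (t + i)) =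
      ∑ i ∈ Finset.range (returnTime f B (z t)), v (f^[i] (z t)) :=
    Finset.sum_congr rfl fun i hi => by rw [hz.apply_add (Finset.mem_range.1 hi)]
  set r := returnTime f B (z 0)
  have hr : (r : ℝ) ≤ H := by exact_mod_cast h.returnTime_le (z 0)
  have hrB : z r ∈ B := by simpa using hz.apply_add_returnTime_mem h 0
  have hεN : 0 ≤ ε * N := by positivity
  rcases lt_or_ge N r with hN | hN
  · have hNr : (N : ℝ) ≤ r := by exact_mod_cast hN.le
    have := abs_sum_le_of_abs_le_one (fun n => hv (z n)) N
    linarith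
  · obtain ⟨m, rfl⟩ := Nat.exists_eq_add_of_le hN
    have hfirst := abs_sum_le_of_abs_le_one (fun n => hv (z n)) r
    have hrest := abs_sum_le_of_blocks (fun n => hv (z n)) (P := fun t => z t ∈ B) hε
      (fun t ht => ⟨_, h.returnTime_pos _, h.returnTime_le _, hz.apply_add_returnTime_mem h t,
        (sum_column t).symm ▸ hcolumn _ ht⟩) m r hrB
    have hεm : ε * m ≤ ε * (r + m : ℕ) := by gcongr; omega
    rw [Finset.sum_range_add]
    refine (abs_add_le _ _).trans ?_
    linarith

theorem GapBound.exists_forall_abs_sum_le_of_columns {X : Type*} {f : X → X} {B : Set X} {H : ℕ}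
    (h : GapBound f B H) {ε : ℝ} (hε : 0 < ε) :
    ∃ N₀ : ℕ, ∀ N ≥ N₀, ∀ v : X → ℝ, (∀ x, |v x| ≤ 1) →
      (∀ y ∈ B, |∑ i ∈ Finset.range (returnTime f B y), v (f^[i] y)| ≤
        ε / 2 * returnTime f B y) →
      ∀ z, IsPseudoOrbit f B z → |∑ n ∈ Finset.range N, v (z n)| ≤ ε * N := by
  obtain ⟨N₀, hN₀⟩ := exists_nat_ge (2 * H / (ε / 2))
  rw [div_le_iff₀ (half_pos hε)] at hN₀
  refine ⟨N₀, fun N hN v hv hcolumn z hz => ?_⟩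
  have hN' : (N₀ : ℝ) * (ε / 2) ≤ N * (ε / 2) := by gcongr
  linarith [hz.abs_sum_le_of_columns h hv (half_pos hε).le hcolumn N]

end Blocks

/-- The map replacing, for each base point `b ∈ A`, the column over `b` of height `r` by the word
`ζ r`. -/
noncomputable def replaceColumns {X : Type*} [MeasurableSpace X] (T : X ≃ᵐ X) (B A : Set X)
    (ζ : ℕ → ℕ → X) (x : X) : X :=
  open Classical in
  if basePt T B x ∈ A then ζ (returnTime T B (basePt T B x)) (age T B x) else x

section ReplaceColumns

variable {X : Type*} [MeasurableSpace X] {T : X ≃ᵐ X} {A B B' : Set X} {ζ : ℕ → ℕ → X} {H : ℕ}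
  {x y : X}

theorem replaceColumns_of_basePt_mem (hx : basePt T B x ∈ A) :
    replaceColumns T B A ζ x = ζ (returnTime T B (basePt T B x)) (age T B x) :=
  if_pos hx

theorem replaceColumns_of_basePt_notMem (hx : basePt T B x ∉ A) : replaceColumns T B A ζ x = x :=
  if_neg hx

theorem replaceColumns_iterate_of_mem (hy : y ∈ B) (hyA : y ∈ A) {i : ℕ}
    (hi : i < returnTime T B y) : replaceColumns T B A ζ (T^[i] y) = ζ (returnTime T B y) i := by
  rw [replaceColumns_of_basePt_mem (by rwa [basePt_iterate hy hi]), basePt_iterate hy hi,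
    age_iterate hy hi]

theorem replaceColumns_iterate_of_notMem (hy : y ∈ B) (hyA : y ∉ A) {i : ℕ}
    (hi : i < returnTime T B y) : replaceColumns T B A ζ (T^[i] y) = T^[i] y :=
  replaceColumns_of_basePt_notMem (by rwa [basePt_iterate hy hi])

theorem GapBound.measurable_replaceColumns (h : GapBound T B H) (hB : MeasurableSet B)
    (hA : MeasurableSet A) (ζ : ℕ → ℕ → X) : Measurable (replaceColumns T B A ζ) := by
  have hζ : Measurable fun p : ℕ × ℕ => ζ p.1 p.2 := measurable_of_countable _
  have hbase := h.measurable_basePt hB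
  exact Measurable.ite (hbase hA) (hζ.comp (((h.measurable_returnTime T.measurable hB).comp
    hbase).prodMk (h.measurable_age hB))) measurable_id

theorem replaceColumns_mem (hB' : B' ⊆ B) (hζ : ∀ b ∈ A, IsWord T B (returnTime T B' b)
    (ζ (returnTime T B' b))) (hx : x ∈ B') : replaceColumns T B' A ζ x ∈ B := by
  by_cases hxA : basePt T B' x ∈ A
  · rw [replaceColumns_of_basePt_mem hxA, age_of_mem hx]
    exact (hζ _ hxA).zero_mem
  · rw [replaceColumns_of_basePt_notMem hxA]
    exact hB' hx

theorem GapBound.apply_replaceColumns_mem (h : GapBound T B' H) (hB' : B' ⊆ B)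
    (hζ : ∀ b ∈ A, IsWord T B (returnTime T B' b) (ζ (returnTime T B' b))) (hx : T x ∈ B') :
    T (replaceColumns T B' A ζ x) ∈ B := by
  by_cases hxA : basePt T B' x ∈ A
  · have hlast := (hζ _ hxA).last
    have hage : returnTime T B' (basePt T B' x) - 1 = age T B' x := by
      rw [h.returnTime_basePt_of_apply_mem hx, Nat.add_sub_cancel]
    rwa [replaceColumns_of_basePt_mem hxA, ← hage]
  · rw [replaceColumns_of_basePt_notMem hxA]
    exact hB' hx

theorem GapBound.replaceColumns_apply (h : GapBound T B' H)
    (hζ : ∀ b ∈ A, IsWord T B (returnTime T B' b) (ζ (returnTime T B' b))) (hx : T x ∉ B') :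
    replaceColumns T B' A ζ (T x) = T (replaceColumns T B' A ζ x) ∨
      (T (replaceColumns T B' A ζ x) ∈ B ∧ replaceColumns T B' A ζ (T x) ∈ B) := by
  have hbase := h.basePt_apply_of_notMem hx
  by_cases hxA : basePt T B' x ∈ A
  · rw [replaceColumns_of_basePt_mem hxA, replaceColumns_of_basePt_mem (hbase ▸ hxA), hbase,
      h.age_apply_of_notMem hx]
    exact (hζ _ hxA).step _ (h.age_add_one_lt_returnTime hx)
  · rw [replaceColumns_of_basePt_notMem hxA, replaceColumns_of_basePt_notMem (by rwa [hbase])]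
    exact .inl rfl

theorem GapBound.isPseudoOrbit_replaceColumns (h : GapBound T B' H) (hB' : B' ⊆ B)
    (hζ : ∀ b ∈ A, IsWord T B (returnTime T B' b) (ζ (returnTime T B' b))) {z : ℕ → X}
    (hz : IsPseudoOrbit T B' z) : IsPseudoOrbit T B (replaceColumns T B' A ζ ∘ z) := by
  intro n
  simp only [Function.comp_apply]
  by_cases hmem : T (z n) ∈ B'
  · have hnext : z (n + 1) ∈ B' := (hz n).elim (fun heq => heq ▸ hmem) And.right
    exact .inr ⟨h.apply_replaceColumns_mem hB' hζ hmem, replaceColumns_mem hB' hζ hnext⟩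
  · rw [(hz n).resolve_right fun hjump => hmem hjump.1]
    exact h.replaceColumns_apply hζ hmem

theorem sum_replaceColumns_iterate (hy : y ∈ B) (v : X → ℝ) [Decidable (y ∈ A)] :
    ∑ i ∈ Finset.range (returnTime T B y), v (replaceColumns T B A ζ (T^[i] y)) =
      if y ∈ A then ∑ i ∈ Finset.range (returnTime T B y), v (ζ (returnTime T B y) i)
      else ∑ i ∈ Finset.range (returnTime T B y), v (T^[i] y) := by
  split_ifs with hyA <;> refine Finset.sum_congr rfl fun i hi => ?_
  · rw [replaceColumns_iterate_of_mem hy hyA (Finset.mem_range.1 hi)]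
  · rw [replaceColumns_iterate_of_notMem hy hyA (Finset.mem_range.1 hi)]

end ReplaceColumns

section Refinements

/-- `π` modifies the identity on a set of measure less than `ε` so as to turn pseudo-orbits through
the new base `B'`, of measure at most `δ`, into pseudo-orbits through the old base `B`. -/
structure IsRefinement {X : Type*} [MeasurableSpace X] (μ : Measure X) (f : X → X) (B B' : Set X)
    (π : X → X) (ε δ : ℝ) : Prop where
  measurableSet : MeasurableSet B'
  exists_gapBound : ∃ H, GapBound f B' H
  measurable : Measurable π
  isPseudoOrbit_comp : ∀ z, IsPseudoOrbit f B' z → IsPseudoOrbit f B (π ∘ z)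
  measureReal_ne_lt : μ.real {x | π x ≠ x} < ε
  measureReal_base_le : μ.real B' ≤ δ

variable {X : Type*} [MeasurableSpace X] {μ : Measure X} [IsProbabilityMeasure μ]

theorem abs_sub_integral_le_one {g : X → ℝ} (hg0 : ∀ x, 0 ≤ g x) (hg1 : ∀ x, g x ≤ 1) (x : X) :
    |g x - ∫ y, g y ∂μ| ≤ 1 := by
  have h0 : 0 ≤ ∫ y, g y ∂μ := integral_nonneg hg0
  have h1 : ∫ y, g y ∂μ ≤ 1 :=
    (integral_mono_of_nonneg (.of_forall hg0) (integrable_const 1) (.of_forall hg1)).trans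
      (by simp)
  rw [abs_le]
  constructor <;> linarith [hg0 x, hg1 x]

variable {T : X ≃ᵐ X} {B : Set X} {H : ℕ} {ι : Type*} [Finite ι] {g : ι → X → ℝ}

theorem exists_goodWord (hT : Ergodic T μ) (hMK : HasMarkers T) (hB : MeasurableSet B)
    (hgap : GapBound T B H) (hg : ∀ j, Measurable (g j)) (hg0 : ∀ j x, 0 ≤ g j x)
    (hg1 : ∀ j x, g j x ≤ 1) {ε : ℝ} (hε : 0 < ε) :
    ∃ s, GoodWord T B (fun j x => g j x - ∫ y, g j y ∂μ) s (ε * s) := by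
  obtain ⟨n, hn⟩ := exists_forall_measure_badBase_lt hT hg hg0 hg1 hε one_pos
  obtain ⟨B', hB'B, hB', ⟨H', hgap'⟩, hsep⟩ := hMK.exists_subset T.measurable hB hgap n
  obtain ⟨x, hx⟩ : ∃ x, x ∉ basePt T B' ⁻¹' badBase μ T B' g ε := by
    by_contra! hall
    have := hn B' H' hB' hgap' hsep
    simp [Set.eq_univ_of_forall hall] at this
  refine ⟨_, _, isWord_iterate (hgap'.returnTime_pos _) (hB'B (hgap'.basePt_mem x))
    (hB'B (hgap'.iterate_returnTime_mem _)), fun j => ?_⟩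
  by_contra! hlt
  exact hx ⟨hgap'.basePt_mem x, j, hlt⟩

/-- Over a sufficiently sparse base, the few columns with bad averages are replaced by good words of
the same height. -/
theorem exists_isRefinement_uniform_average (hT : Ergodic T μ) (hMK : HasMarkers T)
    (hB : MeasurableSet B) (hgap : GapBound T B H) (hg : ∀ j, Measurable (g j))
    (hg0 : ∀ j x, 0 ≤ g j x) (hg1 : ∀ j x, g j x ≤ 1) {ε δ : ℝ} (hε : 0 < ε) (hδ : 0 < δ) :
    ∃ B' π, IsRefinement μ T B B' π ε δ ∧ ∃ N₀ : ℕ, ∀ N ≥ N₀, ∀ z, IsPseudoOrbit T B' z → ∀ j,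
      |∑ n ∈ Finset.range N, (g j (π (z n)) - ∫ x, g j x ∂μ)| ≤ ε * N := by
  classical
  have : Nonempty X := μ.nonempty_of_neZero
  set u : ι → X → ℝ := fun j x => g j x - ∫ y, g j y ∂μ
  have hu1 (j : ι) (x : X) : |u j x| ≤ 1 := abs_sub_integral_le_one (hg0 j) (hg1 j) x
  obtain ⟨s, hs⟩ := exists_goodWord hT hMK hB hgap hg hg0 hg1 (half_pos (half_pos hε))
  obtain ⟨R, hR⟩ := hs.exists_forall_goodWord hu1 (half_pos hε)
  obtain ⟨n₁, hn₁⟩ := exists_forall_measure_badBase_lt hT hg hg0 hg1 (half_pos hε) hε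
  obtain ⟨n₂, hn₂⟩ := exists_nat_ge (1 / δ)
  obtain ⟨B', hB'B, hB', ⟨H', hgap'⟩, hsep⟩ :=
    hMK.exists_subset T.measurable hB hgap (max R (max n₁ n₂))
  set A := badBase μ T B' g (ε / 2)
  have hword (b : X) (hb : b ∈ A) : GoodWord T B u (returnTime T B' b)
      (ε / 2 * returnTime T B' b) :=
    hR _ ((hsep.mono (le_max_left _ _)).le_returnTime hgap' hb.1)
      ⟨b, hB'B hb.1, hB'B (hgap'.iterate_returnTime_mem b)⟩
  choose! ζ hζ hζsum using fun r (hr : GoodWord T B u r (ε / 2 * r)) => hr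
  have hζA (b : X) (hb : b ∈ A) := hζ _ (hword b hb)
  refine ⟨B', replaceColumns T B' A ζ, ⟨hB', ⟨H', hgap'⟩, ?_, ?_, ?_, ?_⟩, ?_⟩
  · exact hgap'.measurable_replaceColumns hB' (measurableSet_badBase T.measurable hgap' hB' hg _) ζ
  · exact fun z => hgap'.isPseudoOrbit_replaceColumns hB'B hζA
  · refine (measureReal_mono fun x hx => ?_).trans_lt
      (hn₁ B' H' hB' hgap' (hsep.mono ((le_max_left _ _).trans (le_max_right _ _))))
    exact not_imp_comm.1 replaceColumns_of_basePt_notMem hx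
  · have hn₂B' := (hsep.mono ((le_max_right _ _).trans (le_max_right _ _))).mul_measureReal_le
      hT.toMeasurePreserving hB'
    have := (mul_le_mul_of_nonneg_right hn₂ measureReal_nonneg).trans hn₂B'
    rwa [one_div_mul_eq_div, div_le_iff₀ hδ, one_mul] at this
  · obtain ⟨N₀, hN₀⟩ := hgap'.exists_forall_abs_sum_le_of_columns hε
    refine ⟨N₀, fun N hN z hz j => hN₀ N hN (fun x => u j (replaceColumns T B' A ζ x))
      (fun x => hu1 j _) (fun y hy => ?_) z hz⟩
    rw [sum_replaceColumns_iterate hy]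
    split_ifs with hyA
    · exact hζsum _ (hword y hyA) j
    · exact not_lt.1 fun hlt => hyA ⟨hy, j, hlt⟩

end Refinements

/-! ### Codings with uniform pattern frequencies -/

/-- The number of times `n < N` at which the `m × m` pattern `(i, j) ↦ u (n + i) j` belongs to
`S`. -/
noncomputable def patternCount {m : ℕ} (S : Set (Fin m → Fin m → Bool)) (u : ℕ → ℕ → Bool)
    (N : ℕ) : ℝ :=
  ∑ n ∈ Finset.range N, S.indicator (fun _ => 1) fun i j => u (n + i) j

/-- The set of points whose `m × m` pattern under the coding `G` belongs to `S`. -/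
def patternSet {X : Type*} (f : X → X) (G : X → ℕ → Bool) {m : ℕ}
    (S : Set (Fin m → Fin m → Bool)) : Set X :=
  (fun x (i j : Fin m) => G (f^[i] x) j) ⁻¹' S

/-- The set of points which enter `B` within `k` steps. -/
def entrySet {X : Type*} (f : X → X) (B : Set X) (k : ℕ) : Set X :=
  ⋃ l ∈ Finset.range k, f^[l + 1] ⁻¹' B

/-- For every pattern set, some window length `N` gives almost all points the same pattern
frequency up to `ε`. This is unique ergodicity of the symbolic system spanned by `F`, expressed
in `X`. -/
def HasUniformPatternFrequencies {X : Type*} [MeasurableSpace X] (μ : Measure X) (f : X → X)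
    (F : X → ℕ → Bool) : Prop :=
  ∀ (m : ℕ) (S : Set (Fin m → Fin m → Bool)) (ε : ℝ), 0 < ε → ∃ N : ℕ, 0 < N ∧ ∃ c : ℝ,
    ∀ᵐ x ∂μ, |patternCount S (fun n => F (f^[n] x)) N - c * N| ≤ ε * N

theorem patternCount_congr {m N : ℕ} {S : Set (Fin m → Fin m → Bool)} {u v : ℕ → ℕ → Bool}
    (h : ∀ n < N + m, ∀ j < m, u n j = v n j) : patternCount S u N = patternCount S v N := by
  refine Finset.sum_congr rfl fun n hn => ?_
  have hpattern : (fun i j : Fin m => u (n + i) j) = fun i j : Fin m => v (n + i) j := by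
    funext i j
    exact h _ (add_lt_add (Finset.mem_range.1 hn) i.2) j j.2
  rw [hpattern]

theorem patternCount_preimage_castLE {m k : ℕ} (h : m ≤ k) (S : Set (Fin m → Fin m → Bool))
    (u : ℕ → ℕ → Bool) (N : ℕ) :
    patternCount ((fun P i j => P (Fin.castLE h i) (Fin.castLE h j)) ⁻¹' S) u N =
      patternCount S u N :=
  rfl

theorem indicator_one_mem_Icc {α : Type*} (s : Set α) (a : α) :
    s.indicator (1 : α → ℝ) a ∈ Set.Icc 0 1 :=
  ⟨Set.indicator_nonneg (fun _ _ => zero_le_one) a,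
    Set.indicator_le_self' (fun _ _ => zero_le_one) a⟩

section Patterns

variable {X : Type*} {f : X → X} {B : Set X} {G : X → ℕ → Bool}

theorem abs_patternCount_sub_sum_indicator_le {z : ℕ → X} (hz : IsPseudoOrbit f B z) {m : ℕ}
    (S : Set (Fin m → Fin m → Bool)) (N : ℕ) :
    |patternCount S (fun n => G (z n)) N -
        ∑ n ∈ Finset.range N, (patternSet f G S).indicator (1 : X → ℝ) (z n)| ≤
      ∑ n ∈ Finset.range N, (entrySet f B m).indicator (1 : X → ℝ) (z n) := by
  rw [patternCount, ← Finset.sum_sub_distrib]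
  refine (Finset.abs_sum_le_sum_abs _ _).trans (Finset.sum_le_sum fun n _ => ?_)
  by_cases hn : z n ∈ entrySet f B m
  · rw [Set.indicator_of_mem hn]
    exact abs_sub_le_of_nonneg_of_le (indicator_one_mem_Icc S _).1 (indicator_one_mem_Icc S _).2
      (indicator_one_mem_Icc _ _).1 (indicator_one_mem_Icc _ _).2
  · have horbit (i : Fin m) : z (n + i) = f^[i] (z n) :=
      hz.apply_add_of_forall_notMem n i fun l hl hmem =>
        hn (Set.mem_biUnion (Finset.mem_range.2 (hl.trans i.2)) hmem)
    have hpattern : S.indicator (fun _ => (1 : ℝ)) (fun i j => G (z (n + i)) j) =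
        (patternSet f G S).indicator 1 (z n) := by
      simp only [horbit]
      rfl
    rw [hpattern, sub_self, abs_zero]
    exact (indicator_one_mem_Icc _ _).1

theorem patternCount_iterate (x : X) {m : ℕ} (S : Set (Fin m → Fin m → Bool)) (N : ℕ) :
    patternCount S (fun n => G (f^[n] x)) N =
      ∑ n ∈ Finset.range N, (patternSet f G S).indicator (1 : X → ℝ) (f^[n] x) := by
  have hiterate (n : ℕ) (i : Fin m) : f^[n + i] x = f^[i] (f^[n] x) := by
    rw [add_comm, Function.iterate_add_apply]
  simp only [patternCount, hiterate]
  rfl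

variable [MeasurableSpace X]

theorem measurableSet_patternSet (hf : Measurable f) (hG : Measurable G) {m : ℕ}
    (S : Set (Fin m → Fin m → Bool)) : MeasurableSet (patternSet f G S) := by
  have hpattern : Measurable fun x (i j : Fin m) => G (f^[i] x) j :=
    measurable_pi_lambda _ fun i => measurable_pi_lambda _ fun j =>
      (measurable_pi_apply (j : ℕ)).comp (hG.comp (hf.iterate i))
  exact hpattern S.toFinite.measurableSet

theorem HasUniformPatternFrequencies.map {Y : Type*} [MeasurableSpace Y] {μ : Measure Y}
    {S : Y → Y} {φ : Y → X} (h : HasUniformPatternFrequencies μ S (G ∘ φ)) (hφ : Measurable φ)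
    (hf : Measurable f) (hG : Measurable G) (hsemi : Function.Semiconj φ S f) :
    HasUniformPatternFrequencies (μ.map φ) f G := by
  intro m A ε hε
  obtain ⟨N, hN, c, hc⟩ := h m A ε hε
  have hcount : Measurable fun x => patternCount A (fun n => G (f^[n] x)) N := by
    simp only [patternCount_iterate]
    exact Finset.measurable_fun_sum _ fun n _ =>
      (measurable_one.indicator (measurableSet_patternSet hf hG A)).comp (hf.iterate n)
  refine ⟨N, hN, c, (ae_map_iff hφ.aemeasurable
    (measurableSet_le (hcount.sub_const _).abs measurable_const)).2 (hc.mono fun y hy => ?_)⟩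
  simpa only [Function.comp_apply, (hsemi.iterate_right _).eq] using hy

theorem measurableSet_entrySet (hf : Measurable f) (hB : MeasurableSet B) (k : ℕ) :
    MeasurableSet (entrySet f B k) :=
  Finset.measurableSet_biUnion _ fun l _ => hf.iterate (l + 1) hB

theorem measureReal_entrySet_le {μ : Measure X} [IsFiniteMeasure μ]
    (hf : MeasurePreserving f μ μ) (hB : MeasurableSet B) (k : ℕ) :
    μ.real (entrySet f B k) ≤ k * μ.real B := by
  refine (measureReal_biUnion_finset_le _ _).trans_eq ?_
  simp only [(hf.iterate _).measureReal_preimage hB.nullMeasurableSet, Finset.sum_const,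
    Finset.card_range, nsmul_eq_mul]

theorem exists_measurable_eventual_value {u : ℕ → X → Bool} (hu : ∀ n, Measurable (u n)) :
    ∃ v : X → Bool, Measurable v ∧ ∀ x b, (∀ᶠ n in atTop, u n x = b) → v x = b := by
  classical
  refine ⟨fun x => decide (∀ᶠ n in atTop, u n x = true), ?_, fun x b hb => ?_⟩
  · have hset : MeasurableSet {x | ∀ᶠ n in atTop, u n x = true} := by
      simp only [eventually_atTop, Set.ofPred_exists, Set.ofPred_forall]
      exact .iUnion fun _ => .iInter fun n => .iInter fun _ => hu n (measurableSet_singleton true)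
    refine measurable_to_bool ?_
    convert hset using 1
    ext x
    simp only [Set.mem_preimage, Set.mem_singleton_iff, decide_eq_true_eq, Set.mem_ofPred_eq]
  · have hiff : (∀ᶠ n in atTop, u n x = true) ↔ b = true := by
      rw [eventually_congr (hb.mono fun n hn => by rw [hn]), eventually_const]
    simp only [hiff, Bool.decide_eq_true]

end Patterns

section CodingSequences

variable {X : Type*} [MeasurableSpace X] {μ : Measure X}

theorem exists_isRefinement_uniform_patternCount [IsProbabilityMeasure μ] {T : X ≃ᵐ X}
    (hT : Ergodic T μ) (hMK : HasMarkers T) {B : Set X} (hB : MeasurableSet B) {H : ℕ}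
    (hgap : GapBound T B H) {G : X → ℕ → Bool} (hG : Measurable G) (k : ℕ) {ε δ : ℝ}
    (hε : 0 < ε) (hδ : 0 < δ) :
    ∃ B' π, IsRefinement μ T B B' π ε δ ∧ ∃ N : ℕ, 0 < N ∧
      ∀ S : Set (Fin k → Fin k → Bool), ∃ c : ℝ, ∀ z, IsPseudoOrbit T B' z →
        |patternCount S (fun n => G (π (z n))) N - c * N| ≤ (2 * ε + k * μ.real B) * N := by
  let E : Option (Set (Fin k → Fin k → Bool)) → Set X
    | none => entrySet T B k
    | some S => patternSet T G S
  have hE : ∀ o, MeasurableSet (E o)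
    | none => measurableSet_entrySet T.measurable hB k
    | some S => measurableSet_patternSet T.measurable hG S
  obtain ⟨B', π, href, N₀, hN₀⟩ := exists_isRefinement_uniform_average hT hMK hB hgap
    (g := fun o => (E o).indicator (1 : X → ℝ))
    (fun o => measurable_one.indicator (hE o))
    (fun o x => (indicator_one_mem_Icc (E o) x).1)
    (fun o x => (indicator_one_mem_Icc (E o) x).2) hε hδ
  refine ⟨B', π, href, N₀ + 1, N₀.succ_pos, fun S => ⟨μ.real (patternSet T G S), fun z hz => ?_⟩⟩
  set N := N₀ + 1
  have hsum (o) : |∑ n ∈ Finset.range N, (E o).indicator (1 : X → ℝ) (π (z n)) -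
      N * μ.real (E o)| ≤ ε * N := by
    simpa only [integral_indicator_one (hE o), Finset.sum_sub_distrib, Finset.sum_const,
      Finset.card_range, nsmul_eq_mul] using hN₀ N N₀.le_succ z hz o
  have hcount := abs_patternCount_sub_sum_indicator_le (G := G) (href.isPseudoOrbit_comp z hz) S N
  have hentry : μ.real (entrySet T B k) * N ≤ k * μ.real B * N :=
    mul_le_mul_of_nonneg_right (measureReal_entrySet_le hT.toMeasurePreserving hB k)
      N.cast_nonneg
  have hsumS := abs_le.1 (hsum (some S))
  have hsumE := abs_le.1 (hsum none)
  simp only [Function.comp_apply, abs_le, E] at hcount hsumS hsumE ⊢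
  constructor <;> linarith

/-- The data maintained during the construction of a coding: the base within which
pseudo-orbits may jump, and the current coding. -/
structure CodingStage (f : X → X) where
  base : Set X
  code : X → ℕ → Bool
  measurableSet_base : MeasurableSet base
  gapBound : ∃ H, GapBound f base H
  measurable_code : Measurable code

/-- The codings `G k` approximate a coding with uniform pattern frequencies: passing from stage
`k` to stage `k + 1` moves points by `π k` and then stores the value of `q k` in the symbol `k`,
which the earlier stages have left free. -/
structure IsCodingSequence (μ : Measure X) (f : X → X) (q : ℕ → X → Bool) (B : ℕ → Set X)
    (π : ℕ → X → X) (G : ℕ → X → ℕ → Bool) : Prop where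
  measurable_code : ∀ k, Measurable (G k)
  code_succ : ∀ k x, G (k + 1) x = Function.update (G k (π k x)) k (q k x)
  isPseudoOrbit_comp : ∀ k z, IsPseudoOrbit f (B (k + 1)) z → IsPseudoOrbit f (B k) (π k ∘ z)
  measureReal_ne_lt : ∀ k, μ.real {x | π k x ≠ x} < (1 / 2) ^ k
  exists_abs_patternCount_sub_le : ∀ k, ∃ N : ℕ, 0 < N ∧ ∀ S : Set (Fin k → Fin k → Bool),
    ∃ c : ℝ, ∀ z, IsPseudoOrbit f (B (k + 1)) z →
      |patternCount S (fun n => G (k + 1) (z n)) N - c * N| ≤ 4 * (1 / 2) ^ k * N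

theorem measurable_update_code {G : X → ℕ → Bool} (hG : Measurable G) {p : X → Bool}
    (hp : Measurable p) (k : ℕ) : Measurable fun x => Function.update (G x) k (p x) := by
  refine measurable_pi_lambda _ fun j => ?_
  obtain rfl | hj := eq_or_ne j k
  · simpa only [Function.update_self] using hp
  · simpa only [Function.update_of_ne hj] using measurable_pi_iff.1 hG j

theorem CodingStage.exists_next [IsProbabilityMeasure μ] {T : X ≃ᵐ X} (hT : Ergodic T μ)
    (hMK : HasMarkers T) {q : ℕ → X → Bool} (hq : ∀ j, Measurable (q j)) (k : ℕ)
    (s : CodingStage T) :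
    ∃ (s' : CodingStage T) (π : X → X),
      IsRefinement μ T s.base s'.base π ((1 / 2) ^ k) ((1 / 2) ^ k / (k + 1 : ℕ)) ∧
      (∀ x, s'.code x = Function.update (s.code (π x)) k (q k x)) ∧
      ∃ N : ℕ, 0 < N ∧ ∀ S : Set (Fin k → Fin k → Bool), ∃ c : ℝ,
        ∀ z, IsPseudoOrbit T s'.base z →
          |patternCount S (fun n => s'.code (z n)) N - c * N| ≤
            (2 * (1 / 2) ^ k + k * μ.real s.base) * N := by
  obtain ⟨H, hH⟩ := s.gapBound
  obtain ⟨B', π, href, N, hN, hcount⟩ :=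
    exists_isRefinement_uniform_patternCount (ε := (1 / 2) ^ k) (δ := (1 / 2) ^ k / (k + 1 : ℕ))
      hT hMK s.measurableSet_base hH s.measurable_code k (by positivity) (by positivity)
  refine ⟨⟨B', fun x => Function.update (s.code (π x)) k (q k x), href.measurableSet,
    href.exists_gapBound, measurable_update_code (s.measurable_code.comp href.measurable) (hq k) k⟩,
    π, href, fun _ => rfl, N, hN, fun S => ?_⟩
  obtain ⟨c, hc⟩ := hcount S
  refine ⟨c, fun z hz => ?_⟩
  have hcode : patternCount S (fun n => Function.update (s.code (π (z n))) k (q k (z n))) N =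
      patternCount S (fun n => s.code (π (z n))) N :=
    patternCount_congr fun n _ j hj => Function.update_of_ne hj.ne _ _
  rw [hcode]
  exact hc z hz

theorem exists_isCodingSequence [IsProbabilityMeasure μ] {T : X ≃ᵐ X} (hT : Ergodic T μ)
    (hMK : HasMarkers T) {q : ℕ → X → Bool} (hq : ∀ j, Measurable (q j)) :
    ∃ B π G, IsCodingSequence μ T q B π G := by
  choose next π href hcode hcount using CodingStage.exists_next (μ := μ) hT hMK hq
  let start : CodingStage T :=
    ⟨Set.univ, fun _ _ => false, .univ, ⟨1, fun _ => ⟨0, one_pos, trivial⟩⟩, measurable_const⟩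
  let s : ℕ → CodingStage T := Nat.rec start next
  have hbase : ∀ k, k * μ.real (s k).base ≤ 2 * (1 / 2) ^ k
    | 0 => by simp
    | k + 1 => by
      have h := (href k (s k)).measureReal_base_le
      rw [le_div_iff₀ (by positivity)] at h
      rw [pow_succ]
      linarith
  refine ⟨fun k => (s k).base, fun k => π k (s k), fun k => (s k).code,
    fun k => (s k).measurable_code, fun k => hcode k (s k),
    fun k => (href k (s k)).isPseudoOrbit_comp, fun k => (href k (s k)).measureReal_ne_lt,
    fun k => ?_⟩
  obtain ⟨N, hN, hS⟩ := hcount k (s k)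
  refine ⟨N, hN, fun S => ?_⟩
  obtain ⟨c, hc⟩ := hS S
  exact ⟨c, fun z hz => (hc z hz).trans
    (mul_le_mul_of_nonneg_right (by linarith [hbase k]) N.cast_nonneg)⟩

namespace IsCodingSequence

variable {f : X → X} {q : ℕ → X → Bool} {B : ℕ → Set X} {π : ℕ → X → X} {G : ℕ → X → ℕ → Bool}

theorem code_succ_of_lt (h : IsCodingSequence μ f q B π G) {j k : ℕ} (hj : j < k) (x : X) :
    G (k + 1) x j = G k (π k x) j := by
  rw [h.code_succ, Function.update_of_ne hj.ne]

theorem exists_isPseudoOrbit_code_eq (h : IsCodingSequence μ f q B π G) (k p : ℕ) :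
    ∀ z, IsPseudoOrbit f (B (k + p)) z →
      ∃ w, IsPseudoOrbit f (B k) w ∧ ∀ n, ∀ j < k, G (k + p) (z n) j = G k (w n) j := by
  induction p with
  | zero => exact fun z hz => ⟨z, hz, fun _ _ _ => rfl⟩
  | succ p ih =>
    intro z hz
    obtain ⟨w, hw, hzw⟩ := ih _ (h.isPseudoOrbit_comp (k + p) z hz)
    exact ⟨w, hw, fun n j hj =>
      (h.code_succ_of_lt (hj.trans_le (k.le_add_right p)) _).trans (hzw n j hj)⟩

theorem ae_eventually_eq [IsFiniteMeasure μ] (h : IsCodingSequence μ f q B π G) :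
    ∀ᵐ x ∂μ, ∀ᶠ k in atTop, π k x = x := by
  have hsum : ∑' k, μ {x | π k x ≠ x} ≠ ⊤ := by
    refine ne_top_of_le_ne_top summable_geometric_two.tsum_ofReal_ne_top
      (ENNReal.tsum_le_tsum fun k => ?_)
    rw [← ofReal_measureReal]
    exact ENNReal.ofReal_le_ofReal (h.measureReal_ne_lt k).le
  filter_upwards [ae_eventually_notMem hsum] with x hx
  exact hx.mono fun k hk => not_not.1 hk

theorem exists_code_eq_code_max (h : IsCodingSequence μ f q B π G) {x : X}
    (hx : ∀ᶠ k in atTop, π k x = x) :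
    ∃ K, ∀ n j, K ≤ n → j < n → G n x j = G (max K (j + 1)) x j := by
  obtain ⟨K, hK⟩ := eventually_atTop.1 hx
  refine ⟨K, fun n j hn hj => ?_⟩
  induction n, (max_le hn hj : max K (j + 1) ≤ n) using Nat.le_induction with
  | base => rfl
  | succ n hle ih =>
    obtain ⟨hKn, hjn⟩ := max_le_iff.1 hle
    rw [h.code_succ_of_lt hjn, hK n hKn, ih hKn hjn]

theorem exists_measurable_limit (h : IsCodingSequence μ f q B π G) :
    ∃ F : X → ℕ → Bool, Measurable F ∧ ∀ x, (∀ᶠ k in atTop, π k x = x) →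
      ∃ K, ∀ n j, K ≤ n → j < n → G n x j = F x j := by
  choose F hF hlim using fun j => exists_measurable_eventual_value fun n =>
    (measurable_pi_apply j).comp (h.measurable_code n)
  refine ⟨fun x j => F j x, measurable_pi_lambda _ hF, fun x hx => ?_⟩
  obtain ⟨K, hK⟩ := h.exists_code_eq_code_max hx
  refine ⟨K, fun n j hn hj => (hK n j hn hj).trans (hlim j x _ ?_).symm⟩
  filter_upwards [eventually_ge_atTop K, eventually_gt_atTop j] with n hn hj using hK n j hn hj

theorem hasUniformPatternFrequencies [IsFiniteMeasure μ] (h : IsCodingSequence μ f q B π G)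
    (hf : MeasurePreserving f μ μ) {F : X → ℕ → Bool}
    (hF : ∀ x, (∀ᶠ k in atTop, π k x = x) → ∃ K, ∀ n j, K ≤ n → j < n → G n x j = F x j) :
    HasUniformPatternFrequencies μ f F := by
  intro m S ε hε
  obtain ⟨l, hl⟩ := exists_pow_lt_of_lt_one (by positivity : 0 < ε / 4) one_half_lt_one
  set k := max m l
  have hmk : m ≤ k := le_max_left m l
  have hkε : 4 * (1 / 2 : ℝ) ^ k ≤ ε := by
    have hkl : (1 / 2 : ℝ) ^ k ≤ (1 / 2) ^ l :=
      pow_le_pow_of_le_one one_half_pos.le one_half_lt_one.le (le_max_right m l)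
    linarith
  obtain ⟨N, hN, hcount⟩ := h.exists_abs_patternCount_sub_le k
  obtain ⟨c, hc⟩ :=
    hcount ((fun P i j => P (Fin.castLE hmk i) (Fin.castLE hmk j)) ⁻¹' S)
  refine ⟨N, hN, c, ?_⟩
  have horbit : ∀ᵐ x ∂μ, ∀ i : ℕ, ∀ᶠ k in atTop, π k (f^[i] x) = f^[i] x :=
    ae_all_iff.2 fun i => (hf.iterate i).quasiMeasurePreserving.ae h.ae_eventually_eq
  filter_upwards [horbit] with x hx
  choose K hK using fun i => hF _ (hx i)
  set p := (Finset.range (N + m)).sup K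
  obtain ⟨w, hw, hxw⟩ := h.exists_isPseudoOrbit_code_eq (k + 1) p _ (isPseudoOrbit_iterate f _ x)
  have hlimit : patternCount S (fun n => F (f^[n] x)) N =
      patternCount S (fun n => G (k + 1) (w n)) N := by
    refine patternCount_congr fun n hn j hj => ?_
    have hKp : K n ≤ p := Finset.le_sup (f := K) (Finset.mem_range.2 hn)
    rw [← hxw n j (by omega), hK n _ j (by omega) (by omega)]
  rw [hlimit, ← patternCount_preimage_castLE hmk]
  exact (hc w hw).trans (mul_le_mul_of_nonneg_right hkε N.cast_nonneg)

end IsCodingSequence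

theorem HasMarkers.exists_hasUniformPatternFrequencies [IsProbabilityMeasure μ] {T : X ≃ᵐ X}
    (hMK : HasMarkers T) (hT : Ergodic T μ) {q : ℕ → X → Bool} (hq : ∀ j, Measurable (q j)) :
    ∃ F : X → ℕ → Bool, Measurable F ∧ (∀ᵐ x ∂μ, ∀ᶠ j in atTop, F x j = q j x) ∧
      HasUniformPatternFrequencies μ T F := by
  obtain ⟨B, π, G, h⟩ := exists_isCodingSequence hT hMK hq
  obtain ⟨F, hF, hlim⟩ := h.exists_measurable_limit
  refine ⟨F, hF, ?_, h.hasUniformPatternFrequencies hT.toMeasurePreserving hlim⟩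
  filter_upwards [h.ae_eventually_eq] with x hx
  obtain ⟨K, hK⟩ := hlim x hx
  filter_upwards [eventually_ge_atTop K] with j hj
  rw [← hK (j + 1) j (hj.trans j.le_succ) j.lt_succ_self, h.code_succ, Function.update_self]

end CodingSequences

/-! ### Restriction to invariant subsets of full measure -/

section Embeddings

variable {X Y : Type*} [MeasurableSpace X] [MeasurableSpace Y]

theorem map_val_comap_of_ae_mem {μ : Measure X} {s : Set X} (hs : MeasurableSet s)
    (h : ∀ᵐ x ∂μ, x ∈ s) : (μ.comap ((↑) : s → X)).map (↑) = μ := by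
  rw [map_comap_subtype_coe hs, Measure.restrict_eq_self_of_ae_mem h]

variable {ν : Measure Y} {e : Y → X} {S : Y → Y} {T : X → X}

theorem eq_of_map_embedding_eq {ν' : Measure Y} (he : MeasurableEmbedding e)
    (h : ν.map e = ν'.map e) : ν = ν' := by
  rw [← he.comap_map ν, h, he.comap_map]

theorem measurePreserving_of_map_embedding (he : MeasurableEmbedding e) (hS : Measurable S)
    (h : Function.Semiconj e S T) (hT : MeasurePreserving T (ν.map e) (ν.map e)) :
    MeasurePreserving S ν ν := by
  refine ⟨hS, eq_of_map_embedding_eq he ?_⟩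
  rw [Measure.map_map he.measurable hS, h.comp_eq, ← Measure.map_map hT.measurable he.measurable,
    hT.map_eq]

theorem ergodic_of_map_embedding (he : MeasurableEmbedding e) (hS : Measurable S)
    (h : Function.Semiconj e S T) (hT : Ergodic T (ν.map e)) : Ergodic S ν := by
  refine ⟨measurePreserving_of_map_embedding he hS h hT.toMeasurePreserving, ⟨fun s hs hinv => ?_⟩⟩
  have hpreimage : e ⁻¹' (T ⁻¹' (e '' s)) = e ⁻¹' (e '' s) := by
    rw [← Set.preimage_comp, ← h.comp_eq, Set.preimage_comp, Set.preimage_image_eq s he.injective,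
      hinv]
  have hae : T ⁻¹' (e '' s) =ᵐ[ν.map e] e '' s := by
    rw [Filter.eventuallyEq_set, he.ae_map_iff]
    exact ae_of_all _ fun y => (Set.ext_iff.1 hpreimage y)
  rw [eventuallyConst_set]
  refine (hT.quasiErgodic.ae_mem_or_ae_notMem₀
    (he.measurableSet_image.2 hs).nullMeasurableSet hae).imp (fun hmem => ?_) fun hnotMem => ?_
  · exact (he.ae_map_iff.1 hmem).mono fun y => he.injective.mem_set_image.1
  · exact (he.ae_map_iff.1 hnotMem).mono fun y => mt he.injective.mem_set_image.2

end Embeddings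

section Restriction

variable {X : Type*} [MeasurableSpace X] {R : Set X}

/-- The automorphism of an invariant set `R` induced by `T`. -/
def restrictEquiv (T : X ≃ᵐ X) (hR : ∀ x, x ∈ R ↔ T x ∈ R) : R ≃ᵐ R where
  toEquiv := T.toEquiv.subtypeEquiv hR
  measurable_toFun := (T.measurable.comp measurable_subtype_coe).subtype_mk
  measurable_invFun := (T.symm.measurable.comp measurable_subtype_coe).subtype_mk

theorem semiconj_val_restrictEquiv (T : X ≃ᵐ X) (hR : ∀ x, x ∈ R ↔ T x ∈ R) :
    Function.Semiconj ((↑) : R → X) (restrictEquiv T hR) T :=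
  fun _ => rfl

theorem hasMarkers_restrictEquiv {T : X ≃ᵐ X} (hR : ∀ x, x ∈ R ↔ T x ∈ R)
    (h : ∀ L, 0 < L → ∃ M, MeasurableSet M ∧ (∀ x ∈ R, ∃ i < 2 * L, T^[i] x ∈ M) ∧
      Separated T M L) :
    HasMarkers (restrictEquiv T hR) := by
  intro L hL
  have hval (n : ℕ) (x : R) : ((restrictEquiv T hR)^[n] x : X) = T^[n] x :=
    ((semiconj_val_restrictEquiv T hR).iterate_right n).eq x
  obtain ⟨M, hM, hgap, hsep⟩ := h L hL
  refine ⟨(↑) ⁻¹' M, measurable_subtype_coe hM, fun x => ?_, fun x hx i hi0 hiL => ?_⟩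
  · simpa only [Set.mem_preimage, hval] using hgap x x.2
  · simpa only [Set.mem_preimage, hval] using hsep x hx i hi0 hiL

variable [StandardBorelSpace X] {μ : Measure X} [IsProbabilityMeasure μ] [NullSingletonClass μ]
  {T : X ≃ᵐ X}

theorem exists_hasUniformPatternFrequencies (hT : Ergodic T μ) {q : ℕ → X → Bool}
    (hq : ∀ j, Measurable (q j)) :
    ∃ F : X → ℕ → Bool, Measurable F ∧ (∀ᵐ x ∂μ, ∀ᶠ j in atTop, F x j = q j x) ∧
      HasUniformPatternFrequencies μ T F := by
  obtain ⟨R, hR, hTR, hμR, hmarkers⟩ := exists_invariant_set_with_markers hT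
  have hinv (x : X) : x ∈ R ↔ T x ∈ R := (Set.ext_iff.1 hTR x).symm
  have he := MeasurableEmbedding.subtype_coe hR
  obtain ⟨μR, rfl⟩ : ∃ μR : Measure R, μR.map Subtype.val = μ :=
    ⟨_, map_val_comap_of_ae_mem hR ((prob_compl_eq_zero_iff hR).2 hμR)⟩
  have : IsProbabilityMeasure μR := Measure.isProbabilityMeasure_of_map Subtype.val
  have hsemi := semiconj_val_restrictEquiv T hinv
  obtain ⟨F, hF, hFq, hfreq⟩ :=
    (hasMarkers_restrictEquiv hinv hmarkers).exists_hasUniformPatternFrequencies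
      (ergodic_of_map_embedding he (restrictEquiv T hinv).measurable hsemi hT)
      (q := fun j x => q j x) fun j => (hq j).comp measurable_subtype_coe
  obtain ⟨F', hF', rfl⟩ := he.exists_measurable_extend hF fun _ => inferInstance
  exact ⟨F', hF', he.ae_map_iff.2 hFq, hfreq.map he.measurable T.measurable hF' hsemi⟩

/-- Storing every coordinate of an injective Borel coding in infinitely many symbols makes it
survive the changes of finitely many symbols. -/
theorem exists_decodable_hasUniformPatternFrequencies (hT : Ergodic T μ) :
    ∃ (F : X → ℕ → Bool) (D : (ℕ → Bool) → X), Measurable F ∧ Measurable D ∧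
      (∀ᵐ x ∂μ, D (F x) = x) ∧ HasUniformPatternFrequencies μ T F := by
  obtain ⟨e, he, hinj⟩ := MeasurableSpace.measurable_injection_nat_bool_of_countablySeparated X
  obtain ⟨F, hF, hFe, hfreq⟩ := exists_hasUniformPatternFrequencies hT
    (q := fun j x => e x j.unpair.1) fun j => (measurable_pi_apply _).comp he
  choose A hA hAlim using fun i => exists_measurable_eventual_value
    (u := fun l (b : ℕ → Bool) => b (Nat.pair i l)) fun l => measurable_pi_apply _
  obtain ⟨D, hD, hDe⟩ := (he.measurableEmbedding hinj).exists_measurable_extend measurable_id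
    fun _ => μ.nonempty_of_neZero
  refine ⟨F, fun b => D fun i => A i b, hF, hD.comp (measurable_pi_lambda _ hA), ?_, hfreq⟩
  filter_upwards [hFe] with x hx
  have hdecode : (fun i => A i (F x)) = e x := by
    funext i
    have hpair : Tendsto (Nat.pair i) atTop atTop :=
      tendsto_atTop_mono (Nat.right_le_pair i) tendsto_id
    refine hAlim i _ _ ((hpair.eventually hx).mono fun l hl => ?_)
    rw [hl, Nat.unpair_pair]
  rw [hdecode]
  exact congrFun hDe x

end Restriction

/-! ### Unique ergodicity from pattern frequencies -/

section PatternFrequencies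

variable {X : Type*} [MeasurableSpace X] {f : X → X} {G : X → ℕ → Bool} {θ : Measure X}
  [IsProbabilityMeasure θ]

theorem integral_patternCount (hf : MeasurePreserving f θ θ) (hG : Measurable G) {m : ℕ}
    (S : Set (Fin m → Fin m → Bool)) (N : ℕ) :
    Integrable (fun x => patternCount S (fun n => G (f^[n] x)) N) θ ∧
      ∫ x, patternCount S (fun n => G (f^[n] x)) N ∂θ = θ.real (patternSet f G S) * N := by
  have hS := measurableSet_patternSet hf.measurable hG S
  have h_integrable (n : ℕ) :
      Integrable (fun x => (patternSet f G S).indicator (1 : X → ℝ) (f^[n] x)) θ :=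
    (hf.iterate n).integrable_comp_of_integrable ((integrable_const 1).indicator hS)
  have hintegral (n : ℕ) : ∫ x, (patternSet f G S).indicator (1 : X → ℝ) (f^[n] x) ∂θ =
      θ.real (patternSet f G S) := by
    rw [← (hf.iterate n).measureReal_preimage hS.nullMeasurableSet,
      ← integral_indicator_one ((hf.iterate n).measurable hS)]
    rfl
  simp only [patternCount_iterate]
  refine ⟨integrable_finsetSum _ fun n _ => h_integrable n, ?_⟩
  simp only [integral_finsetSum _ fun n _ => h_integrable n, hintegral, Finset.sum_const,
    Finset.card_range, nsmul_eq_mul, mul_comm]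

theorem abs_measureReal_patternSet_sub_le (hf : MeasurePreserving f θ θ) (hG : Measurable G)
    {m N : ℕ} {S : Set (Fin m → Fin m → Bool)} {c ε : ℝ} (hN : 0 < N)
    (h : ∀ᵐ x ∂θ, |patternCount S (fun n => G (f^[n] x)) N - c * N| ≤ ε * N) :
    |θ.real (patternSet f G S) - c| ≤ ε := by
  obtain ⟨h_integrable, hintegral⟩ := integral_patternCount hf hG S N
  have hbound := norm_integral_le_of_norm_le_const (μ := θ) (C := ε * N)
    (f := fun x => patternCount S (fun n => G (f^[n] x)) N - c * N) h
  rw [integral_sub h_integrable (integrable_const _), hintegral, integral_const, probReal_univ,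
    one_smul, mul_one, ← sub_mul, Real.norm_eq_abs, abs_mul, Nat.abs_cast] at hbound
  exact le_of_mul_le_mul_right hbound (Nat.cast_pos.2 hN)

/-- Uniformity of the frequencies is a closed condition, so it extends from almost every point
to the whole support. -/
theorem HasUniformPatternFrequencies.measureReal_patternSet_eq [TopologicalSpace X]
    [HereditarilyLindelofSpace X] [OpensMeasurableSpace X] {ρ : Measure X} [IsProbabilityMeasure ρ]
    (h : HasUniformPatternFrequencies θ f G) (hf : Continuous f) (hG : Continuous G)
    (hθ : MeasurePreserving f θ θ) (hρ : MeasurePreserving f ρ ρ)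
    (hsupp : ∀ᵐ x ∂ρ, x ∈ θ.support) {m : ℕ} (S : Set (Fin m → Fin m → Bool)) :
    ρ.real (patternSet f G S) = θ.real (patternSet f G S) := by
  refine eq_of_forall_dist_le fun ε hε => ?_
  obtain ⟨N, hN, c, hc⟩ := h m S (ε / 2) (half_pos hε)
  have hindicator : Continuous (S.indicator fun _ => (1 : ℝ)) := continuous_of_discreteTopology
  have hcount : Continuous fun x => patternCount S (fun n => G (f^[n] x)) N :=
    continuous_finsetSum _ fun n _ => hindicator.comp
      (continuous_pi fun i => continuous_pi fun j =>
        (continuous_apply (j : ℕ)).comp (hG.comp (hf.iterate (n + i))))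
  have hclosed : IsClosed {x | |patternCount S (fun n => G (f^[n] x)) N - c * N| ≤ ε / 2 * N} :=
    isClosed_le (hcount.sub continuous_const).abs continuous_const
  have hsubset := Measure.support_subset_of_isClosed hclosed hc
  have hGm := hG.measurable
  calc dist (ρ.real (patternSet f G S)) (θ.real (patternSet f G S))
      ≤ dist (ρ.real (patternSet f G S)) c + dist (θ.real (patternSet f G S)) c :=
        dist_triangle_right _ _ _
    _ ≤ ε / 2 + ε / 2 :=
        add_le_add
          (abs_measureReal_patternSet_sub_le hρ hGm hN (hsupp.mono fun _ hx => hsubset hx))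
          (abs_measureReal_patternSet_sub_le hθ hGm hN hc)
    _ = ε := add_halves ε

end PatternFrequencies

section Shift

/-- The shift of the first coordinate on doubly infinite sequences of elements of the Cantor
space. -/
def shiftHomeo : (ℤ × ℕ → Bool) ≃ₜ (ℤ × ℕ → Bool) where
  toFun ω p := ω (p.1 + 1, p.2)
  invFun ω p := ω (p.1 - 1, p.2)
  left_inv ω := by simp only [sub_add_cancel]
  right_inv ω := by simp only [add_sub_cancel_right]
  continuous_toFun := continuous_pi fun _ => continuous_apply _
  continuous_invFun := continuous_pi fun _ => continuous_apply _

/-- The term of index `0` of a doubly infinite sequence. -/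
def zeroTerm (ω : ℤ × ℕ → Bool) (j : ℕ) : Bool :=
  ω (0, j)

theorem continuous_zeroTerm : Continuous zeroTerm :=
  continuous_pi fun _ => continuous_apply _

theorem shiftHomeo_iterate_apply (n : ℕ) (ω : ℤ × ℕ → Bool) (p : ℤ × ℕ) :
    (shiftHomeo^[n] ω) p = ω (p.1 + n, p.2) := by
  induction n generalizing ω with
  | zero => simp
  | succ n ih =>
    rw [Function.iterate_succ_apply, ih]
    change ω (p.1 + n + 1, p.2) = _
    rw [add_assoc, Nat.cast_succ]

theorem exists_patternSet_eq (I : Finset (ℤ × ℕ)) (s : Set (I → Bool)) :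
    ∃ (m n : ℕ) (S : Set (Fin m → Fin m → Bool)),
      patternSet shiftHomeo zeroTerm S = shiftHomeo^[n] ⁻¹' (I.restrict ⁻¹' s) := by
  set k : ℕ := I.sup fun p => p.1.natAbs + p.2 + 1
  have hk (p : I) : p.1.1.natAbs + p.1.2 + 1 ≤ k :=
    Finset.le_sup (f := fun p : ℤ × ℕ => p.1.natAbs + p.2 + 1) p.2
  have hfst (p : I) : (p.1.1 + k).toNat < 2 * k := by have := hk p; omega
  have hsnd (p : I) : p.1.2 < 2 * k := by have := hk p; omega
  refine ⟨2 * k, k, (fun P (p : I) => P ⟨_, hfst p⟩ ⟨_, hsnd p⟩) ⁻¹' s, ?_⟩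
  ext ω
  have hwindow : (fun p : I => zeroTerm (shiftHomeo^[(p.1.1 + k).toNat] ω) p.1.2) =
      I.restrict (shiftHomeo^[k] ω) := by
    funext p
    have := hk p
    rw [zeroTerm, Finset.restrict, shiftHomeo_iterate_apply, shiftHomeo_iterate_apply,
      Int.toNat_of_nonneg (by omega), zero_add]
  rw [Set.mem_preimage, Set.mem_preimage, ← hwindow]
  rfl

theorem eq_of_measureReal_patternSet_eq {ρ θ : Measure (ℤ × ℕ → Bool)} [IsFiniteMeasure ρ]
    [IsFiniteMeasure θ] (hρ : MeasurePreserving shiftHomeo ρ ρ)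
    (hθ : MeasurePreserving shiftHomeo θ θ)
    (h : ∀ m (S : Set (Fin m → Fin m → Bool)),
      ρ.real (patternSet shiftHomeo zeroTerm S) = θ.real (patternSet shiftHomeo zeroTerm S)) :
    ρ = θ := by
  refine IsProjectiveLimit.unique (P := fun I => θ.map I.restrict) (fun I => ?_) fun _ => rfl
  ext s hs
  have hrestrict : Measurable (I.restrict : (ℤ × ℕ → Bool) → _) := Finset.measurable_restrict I
  have hsI := hrestrict hs
  obtain ⟨m, n, S, hS⟩ := exists_patternSet_eq I s
  rw [Measure.map_apply hrestrict hs, Measure.map_apply hrestrict hs,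
    ← measureReal_eq_measureReal_iff, ← (hρ.iterate n).measureReal_preimage hsI.nullMeasurableSet,
    ← (hθ.iterate n).measureReal_preimage hsI.nullMeasurableSet, ← hS, h]

theorem eq_of_hasUniformPatternFrequencies {ρ θ : Measure (ℤ × ℕ → Bool)}
    [IsProbabilityMeasure ρ] [IsProbabilityMeasure θ]
    (h : HasUniformPatternFrequencies θ shiftHomeo zeroTerm)
    (hρ : MeasurePreserving shiftHomeo ρ ρ) (hθ : MeasurePreserving shiftHomeo θ θ)
    (hsupp : ∀ᵐ ω ∂ρ, ω ∈ θ.support) : ρ = θ :=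
  eq_of_measureReal_patternSet_eq hρ hθ fun _ => h.measureReal_patternSet_eq
    shiftHomeo.continuous continuous_zeroTerm hθ hρ hsupp

end Shift

/-! ### Topological models -/

section Models

variable {X : Type*} [MeasurableSpace X] {μ : Measure X} {T : X → X}

/-- A strictly ergodic topological model in measure-theoretic form: a topological model whose
measure has full support and is the only invariant Borel probability measure. -/
def IsStrictlyErgodicModel (μ : Measure X) (T : X → X) {Y : Type*} [TopologicalSpace Y]
    [MeasurableSpace Y] (S : Y ≃ₜ Y) (ν : Measure Y) : Prop :=
  IsModel μ T S ν ∧ ν.IsOpenPosMeasure ∧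
    ∀ ρ : Measure Y, IsProbabilityMeasure ρ → MeasurePreserving S ρ ρ → ρ = ν

theorem CesaroMixing.map {Y : Type*} [MeasurableSpace Y] {φ : X → Y} {S : Y → Y}
    (h : CesaroMixing μ T) (hT : MeasurePreserving T μ μ) (hφ : Measurable φ) (hS : Measurable S)
    (hsemi : ∀ᵐ x ∂μ, φ (T x) = S (φ x)) : CesaroMixing (μ.map φ) S := by
  intro A B hA hB
  have hiterate : ∀ᵐ x ∂μ, ∀ j : ℕ, φ (T^[j] x) = S^[j] (φ x) := by
    have hstep : ∀ᵐ x ∂μ, ∀ j : ℕ, φ (T (T^[j] x)) = S (φ (T^[j] x)) :=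
      ae_all_iff.2 fun j => (hT.iterate j).quasiMeasurePreserving.ae hsemi
    filter_upwards [hstep] with x hx j
    induction j with
    | zero => rfl
    | succ j ih => rw [Function.iterate_succ_apply', hx, ih, Function.iterate_succ_apply']
  refine (h _ _ (hφ hA) (hφ hB)).congr fun N => ?_
  congr 1
  refine Finset.sum_congr rfl fun j _ => ?_
  rw [map_measureReal_apply hφ (((hS.iterate j) hA).inter hB), map_measureReal_apply hφ hA,
    map_measureReal_apply hφ hB]
  congr 2
  refine measureReal_congr ?_
  filter_upwards [hiterate] with x hx
  change (φ (T^[j] x) ∈ A ∧ φ x ∈ B) = (S^[j] (φ x) ∈ A ∧ φ x ∈ B)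
  rw [hx]

theorem IsModel.cesaroMixing {Y : Type*} [TopologicalSpace Y] [MeasurableSpace Y] [BorelSpace Y]
    {S : Y ≃ₜ Y} {ν : Measure Y} (h : IsModel μ T S ν) (hT : MeasurePreserving T μ μ)
    (hmix : CesaroMixing μ T) : CesaroMixing ν S := by
  obtain ⟨-, -, φ, -, hφ, -, rfl, -, -, hsemi⟩ := h
  exact hmix.map hT hφ S.measurable hsemi

theorem measIso_map {Y : Type*} [MeasurableSpace Y] [MeasurableEq Y] {φ : X → Y} {ψ : Y → X}
    {S : Y → Y} (hφ : Measurable φ) (hψ : Measurable ψ) (hψφ : ∀ᵐ x ∂μ, ψ (φ x) = x)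
    (hsemi : ∀ᵐ x ∂μ, φ (T x) = S (φ x)) : MeasIso μ T (μ.map φ) S := by
  refine ⟨φ, ψ, hφ, hψ, rfl, hψφ, ?_, hsemi⟩
  refine (ae_map_iff hφ.aemeasurable (measurableSet_eq_fun (hφ.comp hψ) measurable_id)).2 ?_
  exact hψφ.mono fun x => congrArg φ

theorem exists_lift_of_map_eq {Y Ω : Type*} [MeasurableSpace Y] [MeasurableSpace Ω] [Nonempty Y]
    {e : Y → Ω} (he : MeasurableEmbedding e) {ν : Measure Y} {Φ : X → Ω} (hΦ : Measurable Φ)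
    (h : μ.map Φ = ν.map e) :
    ∃ φ : X → Y, Measurable φ ∧ μ.map φ = ν ∧ ∀ᵐ x ∂μ, e (φ x) = Φ x := by
  obtain ⟨r, hr, hre⟩ := he.exists_measurable_extend measurable_id fun _ => inferInstance
  have her : ∀ᵐ ω ∂μ.map Φ, e (r ω) = ω := by
    rw [h, he.ae_map_iff]
    exact ae_of_all _ fun y => congrArg e (congrFun hre y)
  refine ⟨r ∘ Φ, hr.comp hΦ, ?_, ae_of_ae_map hΦ.aemeasurable her⟩
  rw [← Measure.map_map hr hΦ, h, Measure.map_map hr he.measurable, hre, Measure.map_id]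

theorem mapsTo_support {Ω Ω' : Type*} [TopologicalSpace Ω] [MeasurableSpace Ω]
    [TopologicalSpace Ω'] [MeasurableSpace Ω'] {m : Measure Ω} {m' : Measure Ω'} {f : Ω → Ω'}
    (hf : MeasurePreserving f m m') (hc : Continuous f) :
    Set.MapsTo f m.support m'.support := by
  intro ω hω
  rw [Measure.mem_support_iff_forall] at hω ⊢
  intro U hU
  calc 0 < m (f ⁻¹' U) := hω _ (hc.continuousAt hU)
    _ ≤ m (f ⁻¹' toMeasurable m' U) :=
      measure_mono (Set.preimage_mono (subset_toMeasurable m' U))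
    _ = m' U := by
      rw [hf.measure_preimage (measurableSet_toMeasurable m' U).nullMeasurableSet,
        measure_toMeasurable]

section Support

variable {Ω : Type*} [TopologicalSpace Ω] [MeasurableSpace Ω] [BorelSpace Ω] {m : Measure Ω}

theorem mem_support_iff_apply_mem_support {σ : Ω ≃ₜ Ω} (hσ : MeasurePreserving σ m m) (ω : Ω) :
    ω ∈ m.support ↔ σ ω ∈ m.support := by
  have hsymm : MeasurePreserving σ.symm m m :=
    MeasurePreserving.symm σ.toMeasurableEquiv hσ
  refine ⟨fun h => mapsTo_support hσ σ.continuous h, fun h => ?_⟩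
  simpa only [σ.symm_apply_apply] using mapsTo_support hsymm σ.symm.continuous h

theorem isOpenPosMeasure_comap_support [HereditarilyLindelofSpace Ω] :
    (m.comap ((↑) : m.support → Ω)).IsOpenPosMeasure := by
  have hmap := map_val_comap_of_ae_mem Measure.isClosed_support.measurableSet
    (Measure.support_mem_ae (μ := m))
  refine ⟨fun U hU ⟨y, hy⟩ => ?_⟩
  obtain ⟨V, hV, rfl⟩ := isOpen_induced_iff.1 hU
  rw [← Measure.map_apply measurable_subtype_coe hV.measurableSet, hmap]
  exact ((Measure.mem_support_iff_forall _).1 y.2 V (hV.mem_nhds hy)).ne'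

end Support

/-- The model is the support of the image measure. -/
theorem exists_isStrictlyErgodicModel_of_support [IsProbabilityMeasure μ]
    (hT : MeasurePreserving T μ μ) {Ω : Type} [TopologicalSpace Ω] [CompactSpace Ω]
    [TopologicalSpace.MetrizableSpace Ω] [MeasurableSpace Ω] [BorelSpace Ω] {σ : Ω ≃ₜ Ω}
    {Φ : X → Ω} {D : Ω → X} (hΦ : Measurable Φ) (hD : Measurable D)
    (hDΦ : ∀ᵐ x ∂μ, D (Φ x) = x) (hsemi : Function.Semiconj Φ T σ)
    (hu : ∀ ρ : Measure Ω, IsProbabilityMeasure ρ → MeasurePreserving σ ρ ρ →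
      (∀ᵐ ω ∂ρ, ω ∈ (μ.map Φ).support) → ρ = μ.map Φ) :
    ∃ (Y : Type) (_ : MetricSpace Y) (_ : CompactSpace Y) (_ : MeasurableSpace Y)
      (_ : BorelSpace Y) (S : Y ≃ₜ Y) (ν : Measure Y), IsStrictlyErgodicModel μ T S ν := by
  let _ := TopologicalSpace.metrizableSpaceMetric Ω
  set K : Set Ω := (μ.map Φ).support
  have hKm : MeasurableSet K := Measure.isClosed_support.measurableSet
  have hσ : MeasurePreserving σ (μ.map Φ) (μ.map Φ) :=
    .of_semiconj (hΦ.measurePreserving _) hT hsemi σ.measurable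
  let S : K ≃ₜ K := σ.subtype (mem_support_iff_apply_mem_support hσ)
  have hval : Function.Semiconj ((↑) : K → Ω) S σ := fun _ => rfl
  have he := MeasurableEmbedding.subtype_coe hKm
  set ν : Measure K := (μ.map Φ).comap (↑)
  have hν : ν.map (↑) = μ.map Φ := map_val_comap_of_ae_mem hKm Measure.support_mem_ae
  have : IsProbabilityMeasure (μ.map Φ) := Measure.isProbabilityMeasure_map hΦ.aemeasurable
  have : IsProbabilityMeasure (ν.map ((↑) : K → Ω)) := by rwa [hν]
  have : IsProbabilityMeasure ν := Measure.isProbabilityMeasure_of_map ((↑) : K → Ω)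
  have : Nonempty K := ν.nonempty_of_neZero
  obtain ⟨φ, hφ, hφν, hφΦ⟩ := exists_lift_of_map_eq he hΦ hν.symm
  have hiso : MeasIso μ T (μ.map φ) S := by
    refine measIso_map (ψ := fun y : K => D y) hφ (hD.comp he.measurable) ?_ ?_
    · filter_upwards [hφΦ, hDΦ] with x hx hDx
      rw [hx, hDx]
    · filter_upwards [hφΦ, hT.quasiMeasurePreserving.ae hφΦ] with x hx hTx
      rw [Subtype.ext_iff, hTx, hsemi.eq, hval.eq, hx]
  refine ⟨K, inferInstance, isCompact_iff_compactSpace.1 Measure.isClosed_support.isCompact,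
    inferInstance, inferInstance, S, ν, ⟨inferInstance, ?_, hφν ▸ hiso⟩,
    isOpenPosMeasure_comap_support, fun ρ _ hρ => ?_⟩
  · exact measurePreserving_of_map_embedding he S.measurable hval (by rwa [hν])
  · refine eq_of_map_embedding_eq he ?_
    rw [hν]
    refine hu _ (Measure.isProbabilityMeasure_map he.measurable.aemeasurable)
      (.of_semiconj (he.measurable.measurePreserving _) hρ hval σ.measurable) ?_
    exact he.ae_map_iff.2 (ae_of_all _ fun y => y.2)

end Models

section JewettKrieger

variable {X : Type*} [MeasurableSpace X] {μ : Measure X} [IsProbabilityMeasure μ]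

theorem measurable_zpow_apply (T : X ≃ᵐ X) (n : ℤ) :
    Measurable fun x => ((T.toEquiv : Equiv.Perm X) ^ n) x := by
  induction n using Int.induction_on with
  | zero => simpa only [zpow_zero, Equiv.Perm.coe_one, id_eq] using measurable_id'
  | succ n ih =>
    simp only [zpow_add_one, Equiv.Perm.mul_apply]
    exact ih.comp T.measurable
  | pred n ih =>
    simp only [zpow_sub_one, Equiv.Perm.mul_apply]
    exact ih.comp T.symm.measurable

/-- The two-sided itinerary of a point under the coding `F`. -/
def itinerary (T : X ≃ᵐ X) (F : X → ℕ → Bool) (x : X) : ℤ × ℕ → Bool :=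
  fun p => F (((T.toEquiv : Equiv.Perm X) ^ p.1) x) p.2

theorem measurable_itinerary (T : X ≃ᵐ X) {F : X → ℕ → Bool} (hF : Measurable F) :
    Measurable (itinerary T F) :=
  measurable_pi_lambda _ fun p =>
    (measurable_pi_apply p.2).comp (hF.comp (measurable_zpow_apply T p.1))

theorem semiconj_itinerary (T : X ≃ᵐ X) (F : X → ℕ → Bool) :
    Function.Semiconj (itinerary T F) T shiftHomeo := by
  intro x
  funext p
  change F (((T.toEquiv : Equiv.Perm X) ^ p.1) (T.toEquiv x)) p.2 =
    F (((T.toEquiv : Equiv.Perm X) ^ (p.1 + 1)) x) p.2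
  rw [zpow_add_one, Equiv.Perm.mul_apply]

theorem exists_isStrictlyErgodicModel_of_ergodic [StandardBorelSpace X] [NullSingletonClass μ]
    {T : X ≃ᵐ X} (hT : Ergodic T μ) :
    ∃ (Y : Type) (_ : MetricSpace Y) (_ : CompactSpace Y) (_ : MeasurableSpace Y)
      (_ : BorelSpace Y) (S : Y ≃ₜ Y) (ν : Measure Y), IsStrictlyErgodicModel μ T S ν := by
  obtain ⟨F, D, hF, hD, hDF, hfreq⟩ := exists_decodable_hasUniformPatternFrequencies hT
  have hΦ := measurable_itinerary T hF
  have hsemi := semiconj_itinerary T F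
  have hshift : Measurable shiftHomeo := shiftHomeo.measurable
  have : IsProbabilityMeasure (μ.map (itinerary T F)) :=
    Measure.isProbabilityMeasure_map hΦ.aemeasurable
  have hfreqΦ : HasUniformPatternFrequencies (μ.map (itinerary T F)) shiftHomeo zeroTerm :=
    .map hfreq hΦ hshift continuous_zeroTerm.measurable hsemi
  exact exists_isStrictlyErgodicModel_of_support hT.toMeasurePreserving hΦ
    (hD.comp continuous_zeroTerm.measurable) hDF hsemi fun ρ _ hρ =>
      eq_of_hasUniformPatternFrequencies hfreqΦ hρ
        (.of_semiconj (hΦ.measurePreserving _) hT.toMeasurePreserving hsemi hshift)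

theorem exists_isStrictlyErgodicModel_of_ae_eq {T : X → X} (hT : MeasurePreserving T μ μ) {x₀ : X}
    (hx₀ : ∀ᵐ x ∂μ, x = x₀) :
    ∃ (Y : Type) (_ : MetricSpace Y) (_ : CompactSpace Y) (_ : MeasurableSpace Y)
      (_ : BorelSpace Y) (S : Y ≃ₜ Y) (ν : Measure Y), IsStrictlyErgodicModel μ T S ν := by
  refine exists_isStrictlyErgodicModel_of_support hT (σ := Homeomorph.refl Unit)
    (Φ := fun _ => ()) (D := fun _ => x₀) measurable_const measurable_const
    (hx₀.mono fun x hx => hx.symm) (fun _ => rfl) fun ρ _ _ _ => ?_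
  have : IsProbabilityMeasure (μ.map fun _ => ()) :=
    Measure.isProbabilityMeasure_map measurable_const.aemeasurable
  ext s
  rcases Subsingleton.set_cases (p := fun s => s = ∅ ∨ s = Set.univ) (.inl rfl) (.inr rfl) s
    with rfl | rfl
  · rw [measure_empty, measure_empty]
  · rw [measure_univ, measure_univ]

end JewettKrieger

section WeakMixing

variable {X : Type*} [MeasurableSpace X] {μ : Measure X} [IsProbabilityMeasure μ] {T : X ≃ᵐ X}

theorem ergodic_of_ergodic_prod (hwm : Ergodic (Prod.map T T) (μ.prod μ)) : Ergodic T μ :=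
  measurePreserving_fst.ergodic_of_ergodic_semiconj hwm T.measurable fun _ => rfl

/-- The diagonal is invariant under `T × T`, so it is null or conull. -/
theorem exists_ae_eq_or_nullSingletonClass [MeasurableEq X]
    (hwm : Ergodic (Prod.map T T) (μ.prod μ)) :
    (∃ x₀, ∀ᵐ x ∂μ, x = x₀) ∨ NullSingletonClass μ := by
  have hinv : Prod.map T T ⁻¹' Set.diagonal X = Set.diagonal X := by
    ext p
    exact T.injective.eq_iff
  refine (hwm.toPreErgodic.ae_mem_or_ae_notMem measurableSet_diagonal hinv).imp
    (fun hdiag => ?_) fun hdiag => ⟨fun x => ?_⟩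
  · obtain ⟨x₀, hx₀⟩ := (Measure.ae_ae_of_ae_prod hdiag).exists
    exact ⟨x₀, hx₀.mono fun x hx => Eq.symm hx⟩
  · have hnull : (μ.prod μ) ({x} ×ˢ {x}) = 0 := by
      refine measure_mono_null ?_ (measure_eq_zero_iff_ae_notMem.2 hdiag)
      rintro _ ⟨rfl, h⟩
      exact h.symm
    rwa [Measure.prod_prod, mul_self_eq_zero] at hnull

theorem exists_isStrictlyErgodicModel [StandardBorelSpace X]
    (hwm : Ergodic (Prod.map T T) (μ.prod μ)) :
    ∃ (Y : Type) (_ : MetricSpace Y) (_ : CompactSpace Y) (_ : MeasurableSpace Y)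
      (_ : BorelSpace Y) (S : Y ≃ₜ Y) (ν : Measure Y), IsStrictlyErgodicModel μ T S ν := by
  have hT := ergodic_of_ergodic_prod hwm
  rcases exists_ae_eq_or_nullSingletonClass hwm with ⟨x₀, hx₀⟩ | hnull
  · exact exists_isStrictlyErgodicModel_of_ae_eq hT.toMeasurePreserving hx₀
  · exact exists_isStrictlyErgodicModel_of_ergodic hT

end WeakMixing

theorem weakMixing_ap_model_general {X : Type*} [MeasurableSpace X] [StandardBorelSpace X]
    (μ : Measure X) [IsProbabilityMeasure μ] (T : X ≃ᵐ X)
    (hwm : Ergodic (Prod.map T T) (μ.prod μ)) :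
    ∃ (Y : Type) (_ : MetricSpace Y) (_ : CompactSpace Y) (_ : MeasurableSpace Y)
      (_ : BorelSpace Y) (S : Y ≃ₜ Y) (ν : Measure Y),
      IsModel μ (⇑T) S ν ∧ StrictlyErgodicHomeo S ∧
      ∀ (d : ℕ) (y : Y), StrictlyErgodicOn (apGens S d)
        (closure (grpOrbit (apGens S d) (fun _ : Fin d => y))) := by
  obtain ⟨Y, _, _, _, _, S, ν, hmodel, _, hunique⟩ := exists_isStrictlyErgodicModel hwm
  have hT := ergodic_of_ergodic_prod hwm
  have hmix : CesaroMixing ν S :=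
    hmodel.cesaroMixing hT.toMeasurePreserving (cesaroMixing_of_ergodic_prod hwm)
  have hS : MeasurePreserving S ν ν := hmodel.2.1
  have : IsProbabilityMeasure ν := hmodel.1
  exact ⟨Y, _, ‹_›, _, ‹_›, S, ν, hmodel, strictlyErgodicHomeo_of_uniquelyErgodic hS hunique,
    strictlyErgodicOn_closure_grpOrbit hS hunique hmix⟩

/-- **Theorem (weakly mixing systems, arithmetic progressions).** A weakly mixing invertible
measure-preserving system on a Lebesgue (standard Borel) probability space has, for every
`d ≥ 1`, a strictly ergodic topological model `(Y, S)` such that the action of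
`⟨τ_d, σ_d⟩` on `N_d(Y)` (the orbit closure of a diagonal point) is strictly ergodic. -/
theorem weakMixing_ap_model {X : Type*} [MeasurableSpace X] [StandardBorelSpace X]
    (μ : Measure X) [IsProbabilityMeasure μ] (T : X ≃ᵐ X)
    (hT : MeasurePreserving T μ μ)
    (hwm : Ergodic (Prod.map T T) (μ.prod μ))
    (d : ℕ) (hd : 1 ≤ d) :
    ∃ (Y : Type) (_ : MetricSpace Y) (_ : CompactSpace Y) (_ : MeasurableSpace Y)
      (_ : BorelSpace Y) (S : Y ≃ₜ Y) (ν : Measure Y),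
      IsModel μ (⇑T) S ν ∧ StrictlyErgodicHomeo S ∧
      ∀ y : Y, StrictlyErgodicOn (apGens S d)
        (closure (grpOrbit (apGens S d) (fun _ : Fin d => y))) := by
  obtain ⟨Y, _, _, _, _, S, ν, hmodel, hstrict, hap⟩ := weakMixing_ap_model_general μ T hwm
  exact ⟨Y, _, ‹_›, _, ‹_›, S, ν, hmodel, hstrict, hap d⟩

end HSY
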